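/- arXiv:2106.15256 — 6 statements merged into one kernel-verified Lean document; each statement's English description precedes it below -/
import Mathlib

section
/- Let b ∈ ℕ⁺, let τ ∈ {τ_PPT^b, τ_PT^b, τ_ZPT^b, τ_ZPPT^b} and let A = (S, E, δ, ι) be a TS. Every τ-region (sup, sig) of A satisfies, for every directed labeled path q₀ −e₁→ q₁ −e₂→ … −e_ℓ→ q_ℓ of A and every i ∈ {1,…,ℓ}, the congruence sup(qᵢ) ≡ sup(q_{i−1}) − sig⁻(eᵢ) + sig⁺(eᵢ) + |sig(eᵢ)| (mod b+1). Consequently, a τ-region of A is completely determined by its signature and its value on the initial state: if two τ-regions of A have the same signature sig and agree on ι, then they are equal. -/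
namespace PNS

/-- Events of a (b-bounded) type of nets: either a pair `(m,n)` or a group element `z ∈ {0,…,b}`. -/
inductive BEvent : Type
  | pair : ℕ → ℕ → BEvent
  | num : ℕ → BEvent
  deriving DecidableEq

/-- A type of nets `τ = (S_τ, E_τ, δ_τ)` with `S_τ ⊆ ℕ`. -/
structure NetType : Type where
  states : Set ℕ
  events : Set BEvent
  delta : ℕ → BEvent → Option ℕ

def deltaPT (b : ℕ) : ℕ → BEvent → Option ℕ
  | s, .pair m n => if m ≤ s ∧ s - m + n ≤ b then some (s - m + n) else none
  | _, .num _ => none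

def deltaZPT (b : ℕ) : ℕ → BEvent → Option ℕ
  | s, .pair m n => if m ≤ s ∧ s - m + n ≤ b then some (s - m + n) else none
  | s, .num z => some ((s + z) % (b + 1))

def deltaRZPT (b : ℕ) : ℕ → BEvent → Option ℕ
  | s, .pair m n => if s = m ∧ n ≤ b then some n else none
  | s, .num z => some ((s + z) % (b + 1))

/-- The type of `b`-bounded P/T-nets. -/
def tauPT (b : ℕ) : NetType :=
  ⟨{s | s ≤ b}, {e | ∃ m n, e = BEvent.pair m n ∧ m ≤ b ∧ n ≤ b}, deltaPT b⟩

/-- The type of pure `b`-bounded P/T-nets. -/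
def tauPPT (b : ℕ) : NetType :=
  ⟨{s | s ≤ b}, {e | ∃ m n, e = BEvent.pair m n ∧ m ≤ b ∧ n ≤ b ∧ (m = 0 ∨ n = 0)}, deltaPT b⟩

/-- The type of `ℤ_{b+1}`-extended `b`-bounded P/T-nets. -/
def tauZPT (b : ℕ) : NetType :=
  ⟨{s | s ≤ b},
   {e | (∃ m n, e = BEvent.pair m n ∧ m ≤ b ∧ n ≤ b ∧ ¬(m = 0 ∧ n = 0)) ∨
        (∃ z, e = BEvent.num z ∧ z ≤ b)}, deltaZPT b⟩

/-- The type of pure `ℤ_{b+1}`-extended `b`-bounded P/T-nets. -/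
def tauZPPT (b : ℕ) : NetType :=
  ⟨{s | s ≤ b},
   {e | (∃ m n, e = BEvent.pair m n ∧ m ≤ b ∧ n ≤ b ∧ ¬(m = 0 ∧ n = 0) ∧ (m = 0 ∨ n = 0)) ∨
        (∃ z, e = BEvent.num z ∧ z ≤ b)}, deltaZPT b⟩

/-- The type of restricted `ℤ_{b+1}`-extended `b`-bounded P/T-nets. -/
def tauRZPT (b : ℕ) : NetType :=
  ⟨{s | s ≤ b},
   {e | (∃ m n, e = BEvent.pair m n ∧ m ≤ b ∧ n ≤ b ∧ ¬(m = 0 ∧ n = 0)) ∨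
        (∃ z, e = BEvent.num z ∧ z ≤ b)}, deltaRZPT b⟩

/-- A (deterministic, initialized) transition system with states `S`, events `E`. -/
structure TS (S E : Type) : Type where
  delta : S → E → Option S
  init : S

def TS.Reachable {S E : Type} (A : TS S E) (s : S) : Prop :=
  Relation.ReflTransGen (fun x y => ∃ e, A.delta x e = some y) A.init s

/-- Every state is reachable from the initial state. -/
def TS.Initialized {S E : Type} (A : TS S E) : Prop :=
  ∀ s, A.Reachable s

/-- A `τ`-region `(sup, sig)` of a TS `A`. -/
structure IsRegion (τ : NetType) {S E : Type} (A : TS S E)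
    (sup : S → ℕ) (sig : E → BEvent) : Prop where
  sup_mem : ∀ s, sup s ∈ τ.states
  sig_mem : ∀ e, sig e ∈ τ.events
  edge : ∀ s e s', A.delta s e = some s' → τ.delta (sup s) (sig e) = some (sup s')

/-- `A` has the `τ`-state separation property. -/
def HasSSP (τ : NetType) {S E : Type} (A : TS S E) : Prop :=
  ∀ s s' : S, s ≠ s' → ∃ sup sig, IsRegion τ A sup sig ∧ sup s ≠ sup s'

/-- `A` has the `τ`-event state separation property. -/
def HasESSP (τ : NetType) {S E : Type} (A : TS S E) : Prop :=
  ∀ (e : E) (s : S), A.delta s e = none →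
    ∃ sup sig, IsRegion τ A sup sig ∧ τ.delta (sup s) (sig e) = none

def Solvable (τ : NetType) {S E : Type} (A : TS S E) : Prop :=
  HasESSP τ A ∧ HasSSP τ A

def sigMinus : BEvent → ℕ
  | .pair m _ => m
  | .num _ => 0

def sigPlus : BEvent → ℕ
  | .pair _ n => n
  | .num _ => 0

def sigAbs : BEvent → ℕ
  | .pair _ _ => 0
  | .num z => z

open Classical in
/-- The linear TS `s₀ −ev 0→ s₁ −ev 1→ … −ev (m-1)→ s_m` on the `m+1` pairwise
distinct states `Fin (m+1)` with initial state `0`. -/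
noncomputable def linTS {E : Type} (m : ℕ) (ev : ℕ → E) : TS (Fin (m + 1)) E where
  init := ⟨0, Nat.succ_pos m⟩
  delta s e :=
    if h : (s : ℕ) < m ∧ ev (s : ℕ) = e then some ⟨(s : ℕ) + 1, Nat.succ_lt_succ h.1⟩
    else none

/-- The linear TS whose sequence of edge labels is the list `l`. -/
noncomputable def linOfList {E : Type} (l : List E) (d : E) : TS (Fin (l.length + 1)) E :=
  linTS l.length (fun i => l.getD i d)

/-!
In each of the four types every transition is a transition of `τ_ZPT^b`, where an event acts on the
states as a (partial) translation modulo `b + 1`; a region transports this congruence to the edges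
of `A`. Since `δ_τ` is a partial function, `sup s` and `sig e` determine `sup s'` along every edge
`s −e→ s'`, so two supports with the same signature can only differ on a state reachable from `ι` if
they already differ on `ι`.
-/

/-- Restriction of types of nets: every transition of `τ` is a transition of `τ'`. The sets of
states and events are not compared, because `τ` acts on the edges of a transition system only
through `τ.delta`. -/
def NetType.IsRestriction (τ τ' : NetType) : Prop :=
  ∀ ⦃s e s'⦄, τ.delta s e = some s' → τ'.delta s e = some s'

theorem NetType.IsRestriction.refl (τ : NetType) : τ.IsRestriction τ :=
  fun _ _ _ h => h

theorem deltaZPT_pair_eq_some_iff {b s m n s' : ℕ} :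
    deltaZPT b s (.pair m n) = some s' ↔ (m ≤ s ∧ s - m + n ≤ b) ∧ s - m + n = s' := by
  simp only [deltaZPT, Option.ite_none_right_eq_some, Option.some.injEq]

theorem deltaZPT_eq_some_of_deltaPT {b s s' : ℕ} {e : BEvent} (h : deltaPT b s e = some s') :
    deltaZPT b s e = some s' := by
  cases e with
  | pair m n => exact h
  | num z => cases h

theorem tauPT_isRestriction_tauZPT (b : ℕ) : (tauPT b).IsRestriction (tauZPT b) :=
  fun _ _ _ => deltaZPT_eq_some_of_deltaPT

theorem tauPPT_isRestriction_tauZPT (b : ℕ) : (tauPPT b).IsRestriction (tauZPT b) :=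
  fun _ _ _ => deltaZPT_eq_some_of_deltaPT

theorem tauZPPT_isRestriction_tauZPT (b : ℕ) : (tauZPPT b).IsRestriction (tauZPT b) :=
  fun _ _ _ h => h

theorem isRestriction_tauZPT {b : ℕ} {τ : NetType}
    (hτ : τ = tauPPT b ∨ τ = tauPT b ∨ τ = tauZPT b ∨ τ = tauZPPT b) :
    τ.IsRestriction (tauZPT b) := by
  rcases hτ with rfl | rfl | rfl | rfl
  · exact tauPPT_isRestriction_tauZPT b
  · exact tauPT_isRestriction_tauZPT b
  · exact NetType.IsRestriction.refl _
  · exact tauZPPT_isRestriction_tauZPT b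

theorem natCast_eq_of_deltaZPT_eq_some {b s s' : ℕ} {e : BEvent}
    (h : deltaZPT b s e = some s') :
    (s' : ZMod (b + 1)) = s - sigMinus e + sigPlus e + sigAbs e := by
  cases e with
  | pair m n =>
    obtain ⟨⟨hms, -⟩, rfl⟩ := deltaZPT_pair_eq_some_iff.mp h
    simp [sigMinus, sigPlus, sigAbs, Nat.cast_sub hms]
  | num z =>
    have hmod : (s + z) % (b + 1) = s' := Option.some.inj h
    rw [← hmod, ZMod.natCast_mod]
    simp [sigMinus, sigPlus, sigAbs]

section Region

variable {τ : NetType} {S E : Type} {A : TS S E} {sig : E → BEvent}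

theorem IsRegion.natCast_sup_eq {b : ℕ} {sup : S → ℕ} (hR : IsRegion τ A sup sig)
    (hτ : τ.IsRestriction (tauZPT b)) {s s' : S} {e : E} (he : A.delta s e = some s') :
    (sup s' : ZMod (b + 1)) =
      sup s - sigMinus (sig e) + sigPlus (sig e) + sigAbs (sig e) :=
  natCast_eq_of_deltaZPT_eq_some (hτ (hR.edge s e s' he))

theorem IsRegion.sup_eq_of_edge {sup₁ sup₂ : S → ℕ} (h₁ : IsRegion τ A sup₁ sig)
    (h₂ : IsRegion τ A sup₂ sig) {s s' : S} {e : E} (he : A.delta s e = some s')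
    (hs : sup₁ s = sup₂ s) : sup₁ s' = sup₂ s' :=
  Option.some.inj <| calc
    some (sup₁ s') = τ.delta (sup₁ s) (sig e) := (h₁.edge s e s' he).symm
    _ = τ.delta (sup₂ s) (sig e) := by rw [hs]
    _ = some (sup₂ s') := h₂.edge s e s' he

theorem IsRegion.sup_eq_of_reachable {sup₁ sup₂ : S → ℕ} (h₁ : IsRegion τ A sup₁ sig)
    (h₂ : IsRegion τ A sup₂ sig) (h_init : sup₁ A.init = sup₂ A.init) {s : S}
    (hs : A.Reachable s) : sup₁ s = sup₂ s := by
  induction hs with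
  | refl => exact h_init
  | tail _ hstep ih =>
    obtain ⟨e, he⟩ := hstep
    exact h₁.sup_eq_of_edge h₂ he ih

end Region

theorem stmt0_general (b : ℕ) (τ : NetType) {S E : Type} (A : TS S E) :
    (τ.IsRestriction (tauZPT b) →
      ∀ (sup : S → ℕ) (sig : E → BEvent), IsRegion τ A sup sig →
        ∀ s e s', A.delta s e = some s' →
          (sup s' : ZMod (b + 1)) =
            sup s - sigMinus (sig e) + sigPlus (sig e) + sigAbs (sig e)) ∧
    (∀ (sup₁ sup₂ : S → ℕ) (sig : E → BEvent),
      IsRegion τ A sup₁ sig → IsRegion τ A sup₂ sig → sup₁ A.init = sup₂ A.init →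
        ∀ s, A.Reachable s → sup₁ s = sup₂ s) :=
  ⟨fun hτ _ _ hR _ _ _ he => hR.natCast_sup_eq hτ he,
    fun _ _ _ h₁ h₂ h_init _ hs => h₁.sup_eq_of_reachable h₂ h_init hs⟩

/-- For `τ ∈ {τ_PPT^b, τ_PT^b, τ_ZPT^b, τ_ZPPT^b}`, every `τ`-region
`(sup, sig)` of a TS `A` satisfies, along every directed labeled path of `A`, the
congruence `sup(qᵢ) ≡ sup(q_{i-1}) − sig⁻(eᵢ) + sig⁺(eᵢ) + |sig(eᵢ)| (mod b+1)`;
consequently a `τ`-region is completely determined by its signature and its value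
on the initial state. -/
theorem stmt0 (b : ℕ) (hb : 1 ≤ b) (τ : NetType)
    (hτ : τ = tauPPT b ∨ τ = tauPT b ∨ τ = tauZPT b ∨ τ = tauZPPT b)
    {S E : Type} (A : TS S E) (hinit : A.Initialized) :
    (∀ (sup : S → ℕ) (sig : E → BEvent), IsRegion τ A sup sig →
      ∀ (ℓ : ℕ) (q : ℕ → S) (ev : ℕ → E),
        (∀ i < ℓ, A.delta (q i) (ev i) = some (q (i + 1))) →
        ∀ i < ℓ,
          (sup (q (i + 1)) : ZMod (b + 1)) =
            (sup (q i) : ZMod (b + 1)) - (sigMinus (sig (ev i)) : ZMod (b + 1)) +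
              (sigPlus (sig (ev i)) : ZMod (b + 1)) + (sigAbs (sig (ev i)) : ZMod (b + 1))) ∧
    (∀ (sup1 sup2 : S → ℕ) (sig : E → BEvent),
      IsRegion τ A sup1 sig → IsRegion τ A sup2 sig →
      sup1 A.init = sup2 A.init → sup1 = sup2) := by
  obtain ⟨congruence, uniqueness⟩ := stmt0_general b τ A
  exact ⟨fun sup sig hR _ _ _ hpath i hi =>
      congruence (isRestriction_tauZPT hτ) sup sig hR _ _ _ (hpath i hi),
    fun sup₁ sup₂ sig h₁ h₂ h_init =>
      funext fun s => uniqueness sup₁ sup₂ sig h₁ h₂ h_init s (hinit s)⟩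

end PNS
end

section
/- Let b ∈ ℕ⁺, let τ ∈ {τ_PPT^b, τ_PT^b, τ_ZPT^b, τ_ZPPT^b} and let A be a TS containing states s₀, s₁, …, s_b and an event e with s₀ −e→ s₁ −e→ … −e→ s_b (b consecutive e-labeled edges). If (sup, sig) is a τ-region of A with sig(e) = (m,n) and m ≠ n, then (m,n) ∈ {(1,0),(0,1)}; moreover, if sig(e) = (0,1) then sup(s₀) = 0 and sup(s_b) = b, and if sig(e) = (1,0) then sup(s₀) = b and sup(s_b) = 0. -/
namespace PNS

/-! Every firing of `(m, n)` changes the token count by `n - m`, so `b` of them change it by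
`b (n - m)`, while the count stays in `{0, …, b}`. Hence `|n - m| ≤ 1`, and if `|n - m| = 1` then
the count runs through all of `{0, …, b}`. The firing next to the end where it is `0` consumes or
produces exactly `min m n` tokens there, so `min m n = 0`. Reversing time exchanges `m` and `n`. -/

/-- `f 0, …, f k` are the token counts of a place along `k` consecutive firings of a transition that
consumes `m` and produces `n` tokens. Naming the tokens `r` untouched by a firing, instead of
requiring `m ≤ f i` and subtracting, makes the condition symmetric under time reversal. -/
def IsFiringSequence (m n k : ℕ) (f : ℕ → ℕ) : Prop :=
  ∀ i < k, ∃ r, f i = m + r ∧ f (i + 1) = n + r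

namespace IsFiringSequence

variable {m n k : ℕ} {f : ℕ → ℕ}

theorem reverse (h : IsFiringSequence m n k f) :
    IsFiringSequence n m k (fun i => f (k - i)) := by
  intro i hi
  obtain ⟨r, hpre, hpost⟩ := h (k - (i + 1)) (by omega)
  rw [show k - (i + 1) + 1 = k - i by omega] at hpost
  exact ⟨r, hpost, hpre⟩

theorem add_mul_eq (h : IsFiringSequence m n k f) : f k + k * m = f 0 + k * n := by
  induction k with
  | zero => simp
  | succ k ih =>
    have hk : f k + k * m = f 0 + k * n := ih fun i hi => h i (Nat.lt_succ_of_lt hi)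
    obtain ⟨r, hpre, hpost⟩ := h k k.lt_succ_self
    linarith

theorem eq_of_lt (h : IsFiringSequence m n k f) (hk : 0 < k) (hmn : m < n) (hle : f k ≤ k) :
    m = 0 ∧ n = 1 ∧ f 0 = 0 ∧ f k = k := by
  have htotal : f k + k * m = f 0 + k * n := h.add_mul_eq
  have hn : n = m + 1 := by
    have : k * n ≤ k * (m + 1) := by linarith
    exact le_antisymm (Nat.le_of_mul_le_mul_left this hk) hmn
  subst hn
  have hends : f k = f 0 + k := by linarith
  obtain ⟨r, hpre, -⟩ := h 0 hk
  omega

theorem eq_of_gt (h : IsFiringSequence m n k f) (hk : 0 < k) (hnm : n < m) (hle : f 0 ≤ k) :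
    m = 1 ∧ n = 0 ∧ f 0 = k ∧ f k = 0 := by
  obtain ⟨hn, hm, hlast, hfirst⟩ := h.reverse.eq_of_lt hk hnm (by simpa using hle)
  exact ⟨hm, hn, by simpa using hfirst, by simpa using hlast⟩

end IsFiringSequence

/-- A type of nets with states at most `b` in which every event `(m, n)` acts, where defined, by
consuming `m` and then producing `n` tokens. It isolates what the (pure) P/T-types and their
`ℤ_{b+1}`-extensions have in common; the group events of the latter are left unconstrained. -/
structure NetType.IsTokenGame (τ : NetType) (b : ℕ) : Prop where
  le_of_mem_states : ∀ x ∈ τ.states, x ≤ b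
  exists_of_delta_pair : ∀ {x y m n : ℕ}, τ.delta x (.pair m n) = some y →
    ∃ r, x = m + r ∧ y = n + r

theorem exists_of_deltaPT_pair {b x y m n : ℕ} (h : deltaPT b x (.pair m n) = some y) :
    ∃ r, x = m + r ∧ y = n + r := by
  obtain ⟨⟨hmx, -⟩, hy⟩ := Option.ite_none_right_eq_some.mp h
  obtain rfl := Option.some.inj hy
  exact ⟨x - m, by omega, by omega⟩

theorem isTokenGame_tauPT (b : ℕ) : (tauPT b).IsTokenGame b :=
  ⟨fun _ hx => hx, exists_of_deltaPT_pair⟩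

theorem isTokenGame_tauPPT (b : ℕ) : (tauPPT b).IsTokenGame b :=
  ⟨fun _ hx => hx, exists_of_deltaPT_pair⟩

theorem isTokenGame_tauZPT (b : ℕ) : (tauZPT b).IsTokenGame b :=
  ⟨fun _ hx => hx, exists_of_deltaPT_pair (b := b)⟩

theorem isTokenGame_tauZPPT (b : ℕ) : (tauZPPT b).IsTokenGame b :=
  ⟨fun _ hx => hx, exists_of_deltaPT_pair (b := b)⟩

theorem isTokenGame_of_eq_tau {b : ℕ} {τ : NetType}
    (hτ : τ = tauPPT b ∨ τ = tauPT b ∨ τ = tauZPT b ∨ τ = tauZPPT b) : τ.IsTokenGame b := by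
  rcases hτ with rfl | rfl | rfl | rfl
  exacts [isTokenGame_tauPPT b, isTokenGame_tauPT b, isTokenGame_tauZPT b, isTokenGame_tauZPPT b]

theorem IsRegion.isFiringSequence {τ : NetType} {b : ℕ} (hτ : τ.IsTokenGame b) {S E : Type}
    {A : TS S E} {sup : S → ℕ} {sig : E → BEvent} (hreg : IsRegion τ A sup sig)
    {k : ℕ} {s : ℕ → S} {e : E} (hchain : ∀ i < k, A.delta (s i) e = some (s (i + 1)))
    {m n : ℕ} (hsig : sig e = .pair m n) :
    IsFiringSequence m n k (fun i => sup (s i)) :=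
  fun i hi => hτ.exists_of_delta_pair (hsig ▸ hreg.edge _ _ _ (hchain i hi))

theorem stmt1_general {b : ℕ} (hb : 0 < b) {τ : NetType} (hτ : τ.IsTokenGame b)
    {S E : Type} {A : TS S E} {s : ℕ → S} {e : E}
    (hchain : ∀ i < b, A.delta (s i) e = some (s (i + 1)))
    {sup : S → ℕ} {sig : E → BEvent} (hreg : IsRegion τ A sup sig) :
    (∀ m n : ℕ, sig e = BEvent.pair m n → m ≠ n →
      (m = 1 ∧ n = 0) ∨ (m = 0 ∧ n = 1)) ∧
    (sig e = BEvent.pair 0 1 → sup (s 0) = 0 ∧ sup (s b) = b) ∧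
    (sig e = BEvent.pair 1 0 → sup (s 0) = b ∧ sup (s b) = 0) := by
  have sup_le (x : S) : sup x ≤ b := hτ.le_of_mem_states _ (hreg.sup_mem x)
  have increasing {m n : ℕ} (hsig : sig e = .pair m n) (hmn : m < n) :
      m = 0 ∧ n = 1 ∧ sup (s 0) = 0 ∧ sup (s b) = b :=
    (hreg.isFiringSequence hτ hchain hsig).eq_of_lt hb hmn (sup_le _)
  have decreasing {m n : ℕ} (hsig : sig e = .pair m n) (hnm : n < m) :
      m = 1 ∧ n = 0 ∧ sup (s 0) = b ∧ sup (s b) = 0 :=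
    (hreg.isFiringSequence hτ hchain hsig).eq_of_gt hb hnm (sup_le _)
  refine ⟨fun m n hsig hne => ?_, fun hsig => (increasing hsig one_pos).2.2,
    fun hsig => (decreasing hsig one_pos).2.2⟩
  rcases hne.lt_or_gt with hmn | hnm
  · obtain ⟨hm, hn, -⟩ := increasing hsig hmn
    exact .inr ⟨hm, hn⟩
  · obtain ⟨hm, hn, -⟩ := decreasing hsig hnm
    exact .inl ⟨hm, hn⟩

/-- If a TS `A` contains a chain `s₀ −e→ s₁ −e→ … −e→ s_b` of `b`
consecutive `e`-labeled edges and `(sup, sig)` is a `τ`-region of `A` with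
`sig(e) = (m,n)` and `m ≠ n`, then `(m,n) ∈ {(1,0),(0,1)}`; moreover `sig(e) = (0,1)`
forces `sup(s₀) = 0` and `sup(s_b) = b`, and `sig(e) = (1,0)` forces `sup(s₀) = b`
and `sup(s_b) = 0`. -/
theorem stmt1 (b : ℕ) (hb : 1 ≤ b) (τ : NetType)
    (hτ : τ = tauPPT b ∨ τ = tauPT b ∨ τ = tauZPT b ∨ τ = tauZPPT b)
    {S E : Type} (A : TS S E) (hinit : A.Initialized)
    (s : ℕ → S) (e : E) (hchain : ∀ i < b, A.delta (s i) e = some (s (i + 1)))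
    (sup : S → ℕ) (sig : E → BEvent) (hreg : IsRegion τ A sup sig) :
    (∀ m n : ℕ, sig e = BEvent.pair m n → m ≠ n →
      (m = 1 ∧ n = 0) ∨ (m = 0 ∧ n = 1)) ∧
    (sig e = BEvent.pair 0 1 → sup (s 0) = 0 ∧ sup (s b) = b) ∧
    (sig e = BEvent.pair 1 0 → sup (s 0) = b ∧ sup (s b) = 0) :=
  stmt1_general hb (isTokenGame_of_eq_tau hτ) hchain hreg

end PNS
end

section
/- Let τ be an arbitrary type of nets and let A = s₀ −e₁→ s₁ −e₂→ … −e_n→ s_n be a linear TS. If a set R of τ-regions of A is a witness of the τ-ESSP of A (i.e., R contains a solving region for every ESSA of A), then R is also a witness of the τ-SSP of A (i.e., R contains a solving region for every SSA of A). -/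
/-!
Suppose all regions of an ESSP witness agree on `s` and `s'`. Then `s` and `s'` enable the same
events, since a region solving `(e, s)` also solves `(e, s')`, which is impossible if `s'` enables
`e`. Moreover their `e`-successors agree again, because `τ` is deterministic. So agreement is a
bisimulation, and states that agree enable the same words. In a linear TS the longest word enabled
at `s_i` has length `n - i`, so different states never agree.
-/

namespace PNS

/-- The words enabled at `s`, i.e. the labels of the directed paths of `A` that start at `s`. It is
the invariant by which the states of a linear TS are told apart. A word is enabled iff running
`A.delta` along it is defined. -/
def TS.language {S E : Type} (A : TS S E) (s : S) : Language E :=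
  {w | (w.foldlM A.delta s).isSome}

/-- `R` is a witness of the `τ`-ESSP of `A`: a set of `τ`-regions of `A` solving every ESSA. -/
structure IsESSPWitness (τ : NetType) {S E : Type} (A : TS S E)
    (R : Set ((S → ℕ) × (E → BEvent))) : Prop where
  isRegion : ∀ r ∈ R, IsRegion τ A r.1 r.2
  solves : ∀ (e : E) (s : S), A.delta s e = none → ∃ r ∈ R, τ.delta (r.1 s) (r.2 e) = none

/-- `s` and `s'` agree under `R`: no pair `(sup, sig)` in `R` solves the SSA `(s, s')`. -/
def Agree {S E : Type} (R : Set ((S → ℕ) × (E → BEvent))) (s s' : S) : Prop :=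
  ∀ r ∈ R, r.1 s = r.1 s'

section Language

variable {S E : Type} {A : TS S E} {s : S}

theorem TS.nil_mem_language : [] ∈ A.language s :=
  rfl

theorem TS.cons_mem_language {e : E} {w : List E} :
    e :: w ∈ A.language s ↔ ∃ t, A.delta s e = some t ∧ w ∈ A.language t := by
  change ((e :: w).foldlM A.delta s).isSome ↔
    ∃ t, A.delta s e = some t ∧ (w.foldlM A.delta t).isSome
  cases h : A.delta s e <;> simp [h]

end Language

section Agreement

variable {τ : NetType} {S E : Type} {A : TS S E} {R : Set ((S → ℕ) × (E → BEvent))} {s s' t t' : S}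
  {e : E}

theorem Agree.symm (h : Agree R s s') : Agree R s' s :=
  fun r hr ↦ (h r hr).symm

theorem Agree.exists_delta_eq_some (h : Agree R s s') (hR : IsESSPWitness τ A R)
    (hst : A.delta s e = some t) : ∃ t', A.delta s' e = some t' := by
  by_contra hs'
  obtain ⟨r, hr, hsolves⟩ := hR.solves e s' (Option.eq_none_iff_forall_ne_some.2 (not_exists.1 hs'))
  have hedge := (hR.isRegion r hr).edge s e t hst
  rw [h r hr, hsolves] at hedge
  contradiction

theorem Agree.delta (h : Agree R s s') (hreg : ∀ r ∈ R, IsRegion τ A r.1 r.2)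
    (hst : A.delta s e = some t) (hst' : A.delta s' e = some t') : Agree R t t' := by
  intro r hr
  apply Option.some.inj
  calc some (r.1 t)
      _ = τ.delta (r.1 s) (r.2 e) := ((hreg r hr).edge s e t hst).symm
      _ = τ.delta (r.1 s') (r.2 e) := by rw [h r hr]
      _ = some (r.1 t') := (hreg r hr).edge s' e t' hst'

theorem Agree.language_le (h : Agree R s s') (hR : IsESSPWitness τ A R) :
    A.language s ≤ A.language s' := by
  intro w hw
  induction w generalizing s s' with
  | nil => exact TS.nil_mem_language
  | cons e w ih =>
    obtain ⟨t, hst, hw⟩ := TS.cons_mem_language.1 hw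
    obtain ⟨t', hst'⟩ := h.exists_delta_eq_some hR hst
    exact TS.cons_mem_language.2 ⟨t', hst', ih (h.delta hR.isRegion hst hst') hw⟩

theorem Agree.language_eq (h : Agree R s s') (hR : IsESSPWitness τ A R) :
    A.language s = A.language s' :=
  le_antisymm (h.language_le hR) (h.symm.language_le hR)

end Agreement

section Linear

variable {E : Type} {n : ℕ} {ev : ℕ → E}

theorem linTS_delta_castSucc (i : Fin n) :
    (linTS n ev).delta i.castSucc (ev i) = some i.succ :=
  dif_pos ⟨i.isLt, rfl⟩

theorem val_eq_of_linTS_delta_eq_some {s t : Fin (n + 1)} {e : E}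
    (h : (linTS n ev).delta s e = some t) : (t : ℕ) = s + 1 := by
  obtain ⟨_, hst⟩ := Option.dite_none_right_eq_some.1 h
  exact (congrArg Fin.val (Option.some.inj hst)).symm

theorem val_add_length_le_of_mem_language_linTS {s : Fin (n + 1)} {w : List E}
    (hw : w ∈ (linTS n ev).language s) : s + w.length ≤ n := by
  induction w generalizing s with
  | nil => exact s.is_le
  | cons e w ih =>
    obtain ⟨t, hst, hw⟩ := TS.cons_mem_language.1 hw
    have ht := val_eq_of_linTS_delta_eq_some hst
    have hlen := ih hw
    rw [List.length_cons]
    omega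

theorem exists_mem_language_linTS_val_add_length_eq (s : Fin (n + 1)) :
    ∃ w ∈ (linTS n ev).language s, s + w.length = n := by
  induction s using Fin.reverseInduction with
  | last => exact ⟨[], TS.nil_mem_language, rfl⟩
  | cast i ih =>
    obtain ⟨w, hw, hlen⟩ := ih
    refine ⟨ev i :: w, TS.cons_mem_language.2 ⟨i.succ, linTS_delta_castSucc i, hw⟩, ?_⟩
    rw [Fin.val_succ] at hlen
    rw [Fin.val_castSucc, List.length_cons]
    omega

theorem le_of_language_linTS_le {s s' : Fin (n + 1)}
    (h : (linTS n ev).language s ≤ (linTS n ev).language s') : s' ≤ s := by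
  obtain ⟨w, hw, hlen⟩ := exists_mem_language_linTS_val_add_length_eq (ev := ev) s
  have hlen' := val_add_length_le_of_mem_language_linTS (h hw)
  omega

theorem language_linTS_injective (n : ℕ) (ev : ℕ → E) :
    Function.Injective (linTS n ev).language :=
  fun _ _ h ↦ le_antisymm (le_of_language_linTS_le h.ge) (le_of_language_linTS_le h.le)

end Linear

theorem stmt2_general (τ : NetType) {S E : Type} (A : TS S E)
    (hA : Function.Injective A.language) (R : Set ((S → ℕ) × (E → BEvent)))
    (hR : IsESSPWitness τ A R) : ∀ s s' : S, s ≠ s' → ∃ r ∈ R, r.1 s ≠ r.1 s' := by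
  intro s s' hne
  by_contra! hagree
  exact hne (hA (Agree.language_eq hagree hR))

/-- For an arbitrary type of nets `τ` and a linear TS
`A = s₀ −e₁→ … −e_n→ s_n`, every set `R` of `τ`-regions of `A` that witnesses the
`τ`-ESSP of `A` also witnesses the `τ`-SSP of `A`. -/
theorem stmt2 (τ : NetType) {E : Type} (n : ℕ) (ev : ℕ → E)
    (hE : ∀ e : E, ∃ i < n, ev i = e)
    (R : Set ((Fin (n + 1) → ℕ) × (E → BEvent)))
    (hreg : ∀ r ∈ R, IsRegion τ (linTS n ev) r.1 r.2)
    (hessp : ∀ (e : E) (s : Fin (n + 1)), (linTS n ev).delta s e = none →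
      ∃ r ∈ R, τ.delta (r.1 s) (r.2 e) = none) :
    ∀ s s' : Fin (n + 1), s ≠ s' → ∃ r ∈ R, r.1 s ≠ r.1 s' :=
  stmt2_general τ (linTS n ev) (language_linTS_injective n ev) R ⟨hreg, hessp⟩

end PNS
end

section
/- Let b ∈ ℕ⁺ and τ ∈ {τ_PT^b, τ_PPT^b}. Let U = U(A₀,…,A_n) be a union of linear TS (with terminal states t₀,…,t_n) such that for every event e ∈ E(U) there is a state s ∈ S(U) with δ(s,e) undefined. Then U has the τ-ESSP if and only if the linear joining LJ(U) has the τ-ESSP, and U has the τ-SSP if and only if LJ(U) has the τ-SSP. -/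
namespace PNS

/-- A `τ`-region of the union `U(A i)` of TS with pairwise disjoint state sets
(modeled by a sigma type) and shared events `E`. -/
def UnionRegion (τ : NetType) {ι : Type} {S : ι → Type} {E : Type}
    (A : ∀ i, TS (S i) E) (sup : (Σ i, S i) → ℕ) (sig : E → BEvent) : Prop :=
  (∀ s, sup s ∈ τ.states) ∧ (∀ e, sig e ∈ τ.events) ∧
    ∀ (i : ι) (s : S i) (e : E) (s' : S i),
      (A i).delta s e = some s' → τ.delta (sup ⟨i, s⟩) (sig e) = some (sup ⟨i, s'⟩)

/-- The union has the `τ`-SSP: every SSA (pair of distinct states of the same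
constituent) is solved by a `τ`-region of the union. -/
def UnionHasSSP (τ : NetType) {ι : Type} {S : ι → Type} {E : Type}
    (A : ∀ i, TS (S i) E) : Prop :=
  ∀ (i : ι) (s s' : S i), s ≠ s' →
    ∃ sup sig, UnionRegion τ A sup sig ∧ sup ⟨i, s⟩ ≠ sup ⟨i, s'⟩

/-- The union has the `τ`-ESSP: every ESSA is solved by a `τ`-region of the union. -/
def UnionHasESSP (τ : NetType) {ι : Type} {S : ι → Type} {E : Type}
    (A : ∀ i, TS (S i) E) : Prop :=
  ∀ (e : E) (i : ι) (s : S i), (A i).delta s e = none →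
    ∃ sup sig, UnionRegion τ A sup sig ∧ τ.delta (sup ⟨i, s⟩) (sig e) = none

/-- The linear joining `LJ(U)` of a union of linear TS `A i = linTS (m i) (evs i)`:
fresh states `q₁,…,q_n` (`Sum.inr j` represents `q_{j+1}`), fresh events
`w₁,…,w_n` (`Sum.inr (Sum.inl j)` represents `w_{j+1}`) and `y₁,…,y_n`
(`Sum.inr (Sum.inr j)` represents `y_{j+1}`), and the edges
`t_i −w_{i+1}→ q_{i+1}` and `q_i −y_i→ ι_i`. -/
noncomputable def LJ {n : ℕ} {E : Type} (m : Fin (n + 1) → ℕ)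
    (evs : ∀ _ : Fin (n + 1), ℕ → E) :
    TS ((Σ i : Fin (n + 1), Fin (m i + 1)) ⊕ Fin n) (E ⊕ (Fin n ⊕ Fin n)) where
  init := Sum.inl ⟨⟨0, Nat.succ_pos n⟩, ⟨0, Nat.succ_pos _⟩⟩
  delta s e :=
    match s, e with
    | Sum.inl ⟨i, si⟩, Sum.inl e =>
        Option.map (fun s' => Sum.inl ⟨i, s'⟩) ((linTS (m i) (evs i)).delta si e)
    | Sum.inl ⟨i, si⟩, Sum.inr (Sum.inl j) =>
        if (i : ℕ) = (j : ℕ) ∧ (si : ℕ) = m i then some (Sum.inr j) else none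
    | Sum.inr j, Sum.inr (Sum.inr j') =>
        if (j : ℕ) = (j' : ℕ) then
          some (Sum.inl ⟨⟨(j : ℕ) + 1, Nat.succ_lt_succ j.isLt⟩, ⟨0, Nat.succ_pos _⟩⟩)
        else none
    | _, _ => none

/-!
Every joining event `w` or `y` occurs on exactly one edge of `LJ(U)`, so a region of `U` extends
to `LJ(U)` with arbitrary supports on the states `q`, as soon as `τ` has an event between any two
supports. Call each constituent, and each single state `q`, a block. States in different blocks are
separated by a region that is constant on blocks. If such a region is `a` on the block of the source
of a joining event and `c` elsewhere, a signature that leads from `a` to `c` and is not enabled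
at `c` prevents this event in all other blocks. It remains to prevent `w_{k+1}` at a nonterminal
state `s` of `A_k`. The event leaving `s` does not occur at the terminal state `t_k`, so the ESSP
of `U` separates `s` from `t_k`; since the support of `q_{k+1}` is free, `w_{k+1}` can be given
a signature that is enabled at `t_k` and not at `s`.
-/

namespace NetType

/-- `a −e→ c` is an edge of the type of nets `τ`. -/
def IsEdge (τ : NetType) (a : ℕ) (e : BEvent) (c : ℕ) : Prop :=
  e ∈ τ.events ∧ τ.delta a e = some c

/-- The properties of a type of nets that let the solvability of a union of linear TS pass to its
linear joining: a neutral event, an edge between any two states, an event that is enabled at a given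
state but not at another given one, and an event that cannot occur twice in a row. -/
structure IsJoinable (τ : NetType) : Prop where
  exists_neutral : ∃ e, ∀ s ∈ τ.states, τ.IsEdge s e s
  exists_isEdge : ∀ a ∈ τ.states, ∀ c ∈ τ.states, ∃ e, τ.IsEdge a e c
  exists_separating : ∀ a ∈ τ.states, ∀ x ∈ τ.states, a ≠ x →
    ∃ e, ∃ c ∈ τ.states, τ.IsEdge a e c ∧ τ.delta x e = none
  exists_unrepeatable :
    ∃ a ∈ τ.states, ∃ c ∈ τ.states, ∃ e, τ.IsEdge a e c ∧ τ.delta c e = none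

lemma IsJoinable.mono {σ τ : NetType} (hσ : σ.IsJoinable) (hstates : σ.states = τ.states)
    (hdelta : σ.delta = τ.delta) (hevents : σ.events ⊆ τ.events) : τ.IsJoinable := by
  have isEdge_mono {a e c} (h : σ.IsEdge a e c) : τ.IsEdge a e c := ⟨hevents h.1, hdelta ▸ h.2⟩
  obtain ⟨hneutral, hedge, hsep, a, ha, c, hc, e, he, hn⟩ := hσ
  rw [hstates] at hneutral hedge hsep ha hc
  rw [hdelta] at hsep hn
  refine ⟨?_, ?_, ?_, a, ha, c, hc, e, isEdge_mono he, hn⟩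
  · exact hneutral.imp fun e he s hs => isEdge_mono (he s hs)
  · exact fun a ha c hc => (hedge a ha c hc).imp fun e => isEdge_mono
  · intro a ha x hx hne
    obtain ⟨e, c, hc, he, hn⟩ := hsep a ha x hx hne
    exact ⟨e, c, hc, isEdge_mono he, hn⟩

end NetType

section PureNets

/-- The pure event that leads from `a` to `c`; one of the two truncated differences is `0`. -/
def pureEvent (a c : ℕ) : BEvent := .pair (a - c) (c - a)

lemma deltaPT_pureEvent_eq_some_iff {b a c x y : ℕ} :
    deltaPT b x (pureEvent a c) = some y ↔ y ≤ b ∧ x + c = y + a := by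
  simp only [deltaPT, pureEvent, Option.ite_none_right_eq_some, Option.some.injEq]
  omega

lemma deltaPT_pureEvent_eq_none_iff {b a c x : ℕ} :
    deltaPT b x (pureEvent a c) = none ↔ x + c < a ∨ b + a < x + c := by
  simp only [deltaPT, pureEvent, ite_eq_right_iff, reduceCtorEq, imp_false]
  omega

lemma isEdge_tauPPT_pureEvent {b a c x y : ℕ} (ha : a ≤ b) (hc : c ≤ b) (hy : y ≤ b)
    (h : x + c = y + a) : (tauPPT b).IsEdge x (pureEvent a c) y :=
  ⟨⟨_, _, rfl, by omega, by omega, by omega⟩, deltaPT_pureEvent_eq_some_iff.2 ⟨hy, h⟩⟩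

lemma isJoinable_tauPPT {b : ℕ} (hb : 1 ≤ b) : (tauPPT b).IsJoinable where
  exists_neutral :=
    ⟨pureEvent 0 0, fun _ hs => isEdge_tauPPT_pureEvent (Nat.zero_le b) (Nat.zero_le b) hs rfl⟩
  exists_isEdge a ha c hc :=
    ⟨pureEvent a c, isEdge_tauPPT_pureEvent ha hc hc (Nat.add_comm a c)⟩
  exists_separating a ha x _ hne := by
    rcases lt_or_gt_of_ne hne with hlt | hgt
    · exact ⟨pureEvent a b, b, le_refl b,
        isEdge_tauPPT_pureEvent ha le_rfl le_rfl (Nat.add_comm a b),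
        deltaPT_pureEvent_eq_none_iff.2 (Or.inr (by omega))⟩
    · exact ⟨pureEvent a 0, 0, Nat.zero_le b,
        isEdge_tauPPT_pureEvent ha (Nat.zero_le b) (Nat.zero_le b) (Nat.add_comm a 0),
        deltaPT_pureEvent_eq_none_iff.2 (Or.inl hgt)⟩
  exists_unrepeatable :=
    ⟨0, Nat.zero_le b, b, le_refl b, pureEvent 0 b,
      isEdge_tauPPT_pureEvent (Nat.zero_le b) le_rfl le_rfl (Nat.add_comm 0 b),
      deltaPT_pureEvent_eq_none_iff.2 (Or.inr (by omega))⟩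

lemma isJoinable_tauPT {b : ℕ} (hb : 1 ≤ b) : (tauPT b).IsJoinable :=
  (isJoinable_tauPPT hb).mono rfl rfl fun _ ⟨m, n, he, hm, hn, _⟩ => ⟨m, n, he, hm, hn⟩

end PureNets

lemma UnionHasESSP.exists_sup_ne {τ : NetType} {ι : Type} {S : ι → Type} {E : Type}
    {A : ∀ i, TS (S i) E} (H : UnionHasESSP τ A) {i : ι} {s s' t : S i} {e : E}
    (hs : (A i).delta s e = some s') (ht : (A i).delta t e = none) :
    ∃ sup sig, UnionRegion τ A sup sig ∧ sup ⟨i, s⟩ ≠ sup ⟨i, t⟩ := by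
  obtain ⟨sup, sig, hR, hnone⟩ := H e i t ht
  refine ⟨sup, sig, hR, fun heq => ?_⟩
  have hsome := hR.2.2 i s e s' hs
  rw [heq, hnone] at hsome
  contradiction

section LinearTS

variable {E : Type} (m : ℕ) (ev : ℕ → E)

lemma linTS_delta_last (e : E) : (linTS m ev).delta (Fin.last m) e = none := by
  simp [linTS]

lemma exists_linTS_delta_eq_some {s : Fin (m + 1)} (h : s ≠ Fin.last m) :
    ∃ e s', (linTS m ev).delta s e = some s' := by
  have hlt : (s : ℕ) < m := Fin.val_lt_last h
  exact ⟨ev s, ⟨s + 1, Nat.succ_lt_succ hlt⟩, by simp [linTS, hlt]⟩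

end LinearTS

section LinearJoining

variable {n : ℕ} {E : Type} (m : Fin (n + 1) → ℕ) (evs : ∀ _ : Fin (n + 1), ℕ → E)

/-- The source of the only edge of the linear joining labeled with a given joining event: the
terminal state `t_k` for `w_{k+1}` (`Sum.inl k`) and `q_{k+1}` for `y_{k+1}` (`Sum.inr k`). -/
def joinSource : Fin n ⊕ Fin n → (Σ i : Fin (n + 1), Fin (m i + 1)) ⊕ Fin n
  | .inl k => .inl ⟨k.castSucc, Fin.last _⟩
  | .inr k => .inr k

/-- The target of the only edge of the linear joining labeled with a given joining event: `q_{k+1}`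
for `w_{k+1}` (`Sum.inl k`) and the initial state `ι_{k+1}` for `y_{k+1}` (`Sum.inr k`). -/
def joinTarget : Fin n ⊕ Fin n → (Σ i : Fin (n + 1), Fin (m i + 1)) ⊕ Fin n
  | .inl k => .inr k
  | .inr k => .inl ⟨k.succ, 0⟩

/-- The block of a state of the linear joining: the index of its constituent, or the state itself
if it is one of the joining states `q_j`. -/
def block : (Σ i : Fin (n + 1), Fin (m i + 1)) ⊕ Fin n → Fin (n + 1) ⊕ Fin n :=
  Sum.map Sigma.fst id

lemma block_joinTarget_ne (v : Fin n ⊕ Fin n) :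
    block m (joinTarget m v) ≠ block m (joinSource m v) := by
  rcases v with k | k <;> exact nofun

variable {m} in
lemma exists_ne_last_of_block_eq {s : (Σ i : Fin (n + 1), Fin (m i + 1)) ⊕ Fin n}
    {v : Fin n ⊕ Fin n} (hblock : block m s = block m (joinSource m v))
    (hne : s ≠ joinSource m v) :
    ∃ k, ∃ r : Fin (m k.castSucc + 1),
      v = .inl k ∧ s = .inl ⟨k.castSucc, r⟩ ∧ r ≠ Fin.last _ := by
  rcases s with ⟨i, r⟩ | j <;> rcases v with k | k
  · obtain rfl : i = k.castSucc := Sum.inl.inj hblock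
    exact ⟨k, r, rfl, rfl, by rintro rfl; exact hne rfl⟩
  · cases hblock
  · cases hblock
  · exact absurd (congrArg Sum.inr (Sum.inr.inj hblock)) hne

lemma LJ_delta_inl_inl (i : Fin (n + 1)) (s : Fin (m i + 1)) (e : E) :
    (LJ m evs).delta (.inl ⟨i, s⟩) (.inl e) =
      ((linTS (m i) (evs i)).delta s e).map fun s' => .inl ⟨i, s'⟩ := rfl

variable {m evs} in
lemma LJ_delta_inr_eq_some_iff {s s' : (Σ i : Fin (n + 1), Fin (m i + 1)) ⊕ Fin n}
    {v : Fin n ⊕ Fin n} :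
    (LJ m evs).delta s (.inr v) = some s' ↔ s = joinSource m v ∧ s' = joinTarget m v := by
  constructor
  · intro h
    rcases s with ⟨i, r⟩ | j <;> rcases v with k | k
    · obtain ⟨⟨hi, hr⟩, htarget⟩ := Option.ite_none_right_eq_some.1 h
      obtain rfl : i = k.castSucc := Fin.ext hi
      obtain rfl : r = Fin.last _ := Fin.ext hr
      exact ⟨rfl, (Option.some.inj htarget).symm⟩
    · cases h
    · cases h
    · obtain ⟨hj, htarget⟩ := Option.ite_none_right_eq_some.1 h
      obtain rfl : j = k := Fin.ext hj
      exact ⟨rfl, (Option.some.inj htarget).symm⟩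
  · rintro ⟨rfl, rfl⟩
    rcases v with k | k
    · exact if_pos ⟨rfl, rfl⟩
    · exact if_pos rfl

variable {m evs} in
lemma LJ_delta_inr_eq_none_iff {s : (Σ i : Fin (n + 1), Fin (m i + 1)) ⊕ Fin n}
    {v : Fin n ⊕ Fin n} :
    (LJ m evs).delta s (.inr v) = none ↔ s ≠ joinSource m v := by
  simp [Option.eq_none_iff_forall_ne_some, LJ_delta_inr_eq_some_iff]

variable {m evs} {τ : NetType} {sup : (Σ i : Fin (n + 1), Fin (m i + 1)) ⊕ Fin n → ℕ}

lemma isRegion_LJ_iff {sig : E ⊕ (Fin n ⊕ Fin n) → BEvent} :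
    IsRegion τ (LJ m evs) sup sig ↔
      UnionRegion τ (fun i => linTS (m i) (evs i)) (sup ∘ Sum.inl) (sig ∘ Sum.inl) ∧
      (∀ j, sup (.inr j) ∈ τ.states) ∧
      ∀ v, τ.IsEdge (sup (joinSource m v)) (sig (.inr v)) (sup (joinTarget m v)) := by
  constructor
  · rintro ⟨hsup, hsig, hedge⟩
    refine ⟨⟨fun s => hsup _, fun e => hsig _, fun i s e s' hs => hedge _ _ _ ?_⟩,
      fun j => hsup _, fun v => ⟨hsig _, hedge _ _ _ (LJ_delta_inr_eq_some_iff.2 ⟨rfl, rfl⟩)⟩⟩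
    rw [LJ_delta_inl_inl, hs, Option.map_some]
  · rintro ⟨⟨hsup, hsig, hedge⟩, hq, hjoin⟩
    refine ⟨Sum.rec hsup hq, Sum.rec hsig fun v => (hjoin v).1, ?_⟩
    rintro s (e | v) s' hs
    · rcases s with ⟨i, s⟩ | j
      · obtain ⟨t, ht, rfl⟩ := Option.map_eq_some_iff.1 hs
        exact hedge i s e t ht
      · cases hs
    · obtain ⟨rfl, rfl⟩ := LJ_delta_inr_eq_some_iff.1 hs
      exact (hjoin v).2

namespace NetType.IsJoinable

lemma exists_isRegion_LJ (hτ : τ.IsJoinable) {sig : E → BEvent}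
    (hU : UnionRegion τ (fun i => linTS (m i) (evs i)) (sup ∘ Sum.inl) sig)
    (hq : ∀ j, sup (.inr j) ∈ τ.states) :
    ∃ sig', IsRegion τ (LJ m evs) sup (Sum.elim sig sig') := by
  have hsup : ∀ s, sup s ∈ τ.states := Sum.rec hU.1 hq
  choose sig' hsig' using fun v =>
    hτ.exists_isEdge _ (hsup (joinSource m v)) _ (hsup (joinTarget m v))
  exact ⟨sig', isRegion_LJ_iff.2 ⟨hU, hq, hsig'⟩⟩

lemma exists_isRegion_LJ_of_isEdge (hτ : τ.IsJoinable) {sig : E → BEvent}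
    (hU : UnionRegion τ (fun i => linTS (m i) (evs i)) (sup ∘ Sum.inl) sig)
    (hq : ∀ j, sup (.inr j) ∈ τ.states) {v : Fin n ⊕ Fin n} {e : BEvent}
    (he : τ.IsEdge (sup (joinSource m v)) e (sup (joinTarget m v))) :
    ∃ sig', IsRegion τ (LJ m evs) sup sig' ∧ sig' (.inr v) = e := by
  obtain ⟨sig', hR⟩ := hτ.exists_isRegion_LJ hU hq
  refine ⟨Sum.elim sig (Function.update sig' v e), isRegion_LJ_iff.2 ⟨hU, hq, fun u => ?_⟩, ?_⟩
  · rcases eq_or_ne u v with rfl | huv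
    · simpa using he
    · simpa [huv] using (isRegion_LJ_iff.1 hR).2.2 u
  · exact Function.update_self v e sig'

lemma exists_unionRegion_block (hτ : τ.IsJoinable) (evs : ∀ _ : Fin (n + 1), ℕ → E)
    {g : Fin (n + 1) ⊕ Fin n → ℕ} (hg : ∀ x, g x ∈ τ.states) :
    ∃ sig, UnionRegion τ (fun i => linTS (m i) (evs i)) ((g ∘ block m) ∘ Sum.inl) sig := by
  obtain ⟨e, he⟩ := hτ.exists_neutral
  exact ⟨fun _ => e, fun _ => hg _, fun _ => (he _ (hg (.inl 0))).1,
    fun _ _ _ _ _ => (he _ (hg _)).2⟩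

lemma exists_isRegion_sup_ne_of_block_ne (hτ : τ.IsJoinable) (evs : ∀ _ : Fin (n + 1), ℕ → E)
    {s s' : (Σ i : Fin (n + 1), Fin (m i + 1)) ⊕ Fin n} (hblock : block m s ≠ block m s') :
    ∃ sup sig, IsRegion τ (LJ m evs) sup sig ∧ sup s ≠ sup s' := by
  obtain ⟨a, ha, c, hc, e, he, hnone⟩ := hτ.exists_unrepeatable
  have hac : a ≠ c := by
    rintro rfl
    exact Option.some_ne_none a (he.2.symm.trans hnone)
  let g x := if x = block m s then a else c
  have hg (x) : g x ∈ τ.states := ite_mem.2 ⟨fun _ => ha, fun _ => hc⟩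
  obtain ⟨sig, hU⟩ := hτ.exists_unionRegion_block evs hg
  obtain ⟨sig', hR⟩ := hτ.exists_isRegion_LJ hU fun _ => hg _
  exact ⟨_, _, hR, by simpa [g, hblock.symm] using hac⟩

lemma exists_delta_inr_eq_none_of_block_ne (hτ : τ.IsJoinable) (evs : ∀ _ : Fin (n + 1), ℕ → E)
    {s : (Σ i : Fin (n + 1), Fin (m i + 1)) ⊕ Fin n} {v : Fin n ⊕ Fin n}
    (hblock : block m s ≠ block m (joinSource m v)) :
    ∃ sup sig, IsRegion τ (LJ m evs) sup sig ∧ τ.delta (sup s) (sig (.inr v)) = none := by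
  obtain ⟨a, ha, c, hc, e, he, hnone⟩ := hτ.exists_unrepeatable
  let g x := if x = block m (joinSource m v) then a else c
  have hg (x) : g x ∈ τ.states := ite_mem.2 ⟨fun _ => ha, fun _ => hc⟩
  have hsource : g (block m (joinSource m v)) = a := if_pos rfl
  have htarget : g (block m (joinTarget m v)) = c := if_neg (block_joinTarget_ne m v)
  obtain ⟨sig, hU⟩ := hτ.exists_unionRegion_block evs hg
  obtain ⟨sig', hR, hv⟩ := hτ.exists_isRegion_LJ_of_isEdge hU (fun _ => hg _) (v := v) (e := e)
    (by rwa [Function.comp_apply, Function.comp_apply, hsource, htarget])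
  refine ⟨_, _, hR, ?_⟩
  rwa [hv, Function.comp_apply, show g (block m s) = c from if_neg hblock]

lemma exists_delta_inr_eq_none_of_ne_last (hτ : τ.IsJoinable)
    (H : UnionHasESSP τ (fun i => linTS (m i) (evs i))) {k : Fin n}
    {r : Fin (m k.castSucc + 1)} (hr : r ≠ Fin.last _) :
    ∃ sup sig, IsRegion τ (LJ m evs) sup sig ∧
      τ.delta (sup (.inl ⟨k.castSucc, r⟩)) (sig (.inr (.inl k))) = none := by
  obtain ⟨e, r', hstep⟩ := exists_linTS_delta_eq_some _ (evs k.castSucc) hr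
  obtain ⟨sup, sig, hU, hne⟩ := H.exists_sup_ne hstep (linTS_delta_last _ _ e)
  obtain ⟨w, c, hc, hw, hnone⟩ := hτ.exists_separating _ (hU.1 _) _ (hU.1 _) hne.symm
  obtain ⟨sig', hR, rfl⟩ := hτ.exists_isRegion_LJ_of_isEdge (sup := Sum.elim sup fun _ => c) hU
    (fun _ => hc) (v := .inl k) hw
  exact ⟨_, _, hR, hnone⟩

lemma exists_delta_inr_eq_none (hτ : τ.IsJoinable)
    (H : UnionHasESSP τ (fun i => linTS (m i) (evs i)))
    {s : (Σ i : Fin (n + 1), Fin (m i + 1)) ⊕ Fin n} {v : Fin n ⊕ Fin n}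
    (hs : s ≠ joinSource m v) :
    ∃ sup sig, IsRegion τ (LJ m evs) sup sig ∧ τ.delta (sup s) (sig (.inr v)) = none := by
  by_cases hblock : block m s = block m (joinSource m v)
  · obtain ⟨k, r, rfl, rfl, hr⟩ := exists_ne_last_of_block_eq hblock hs
    exact hτ.exists_delta_inr_eq_none_of_ne_last H hr
  · exact hτ.exists_delta_inr_eq_none_of_block_ne evs hblock

lemma exists_delta_inl_eq_none (hτ : τ.IsJoinable)
    (H : UnionHasESSP τ (fun i => linTS (m i) (evs i)))
    {s : (Σ i : Fin (n + 1), Fin (m i + 1)) ⊕ Fin n} {e : E}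
    (hs : (LJ m evs).delta s (.inl e) = none) :
    ∃ sup sig, IsRegion τ (LJ m evs) sup sig ∧ τ.delta (sup s) (sig (.inl e)) = none := by
  -- At a joining state, reuse a support of the terminal state of `A₀`, where `e` does not occur.
  obtain ⟨i, r, hr, hsup⟩ : ∃ i, ∃ r : Fin (m i + 1), (linTS (m i) (evs i)).delta r e = none ∧
      ∀ sup : _ → ℕ, Sum.elim sup (fun _ => sup ⟨i, r⟩) s = sup ⟨i, r⟩ := by
    rcases s with ⟨i, r⟩ | j
    · exact ⟨i, r, Option.map_eq_none_iff.1 hs, fun _ => rfl⟩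
    · exact ⟨0, Fin.last _, linTS_delta_last _ _ e, fun _ => rfl⟩
  obtain ⟨sup, sig, hU, hnone⟩ := H e i r hr
  obtain ⟨sig', hR⟩ := hτ.exists_isRegion_LJ (sup := Sum.elim sup fun _ => sup ⟨i, r⟩) hU
    fun _ => hU.1 _
  exact ⟨_, _, hR, by rwa [hsup]⟩

lemma hasESSP_LJ (hτ : τ.IsJoinable) (H : UnionHasESSP τ (fun i => linTS (m i) (evs i))) :
    HasESSP τ (LJ m evs) := by
  rintro (e | v) s hs
  · exact hτ.exists_delta_inl_eq_none H hs
  · exact hτ.exists_delta_inr_eq_none H (LJ_delta_inr_eq_none_iff.1 hs)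

lemma hasSSP_LJ (hτ : τ.IsJoinable) (H : UnionHasSSP τ (fun i => linTS (m i) (evs i))) :
    HasSSP τ (LJ m evs) := by
  intro s s' hne
  by_cases hblock : block m s = block m s'
  · rcases s with ⟨i, r⟩ | j <;> rcases s' with ⟨i', r'⟩ | j'
    · obtain rfl : i = i' := Sum.inl.inj hblock
      obtain ⟨sup, sig, hU, hsup⟩ := H i r r' (by rintro rfl; exact hne rfl)
      obtain ⟨sig', hR⟩ := hτ.exists_isRegion_LJ (sup := Sum.elim sup fun _ => sup ⟨i, r⟩) hU
        fun _ => hU.1 _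
      exact ⟨_, _, hR, hsup⟩
    · cases hblock
    · cases hblock
    · exact absurd (congrArg Sum.inr (Sum.inr.inj hblock)) hne
  · exact hτ.exists_isRegion_sup_ne_of_block_ne evs hblock

end NetType.IsJoinable

lemma unionHasESSP_of_LJ (H : HasESSP τ (LJ m evs)) :
    UnionHasESSP τ (fun i => linTS (m i) (evs i)) := by
  intro e i s hs
  obtain ⟨sup, sig, hR, hnone⟩ := H (.inl e) (.inl ⟨i, s⟩) (Option.map_eq_none_iff.2 hs)
  exact ⟨_, _, (isRegion_LJ_iff.1 hR).1, hnone⟩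

lemma unionHasSSP_of_LJ (H : HasSSP τ (LJ m evs)) :
    UnionHasSSP τ (fun i => linTS (m i) (evs i)) := by
  intro i s s' hne
  obtain ⟨sup, sig, hR, hsup⟩ := H (.inl ⟨i, s⟩) (.inl ⟨i, s'⟩) (by simpa using hne)
  exact ⟨_, _, (isRegion_LJ_iff.1 hR).1, hsup⟩

end LinearJoining

theorem stmt3_general {τ : NetType} (hτ : τ.IsJoinable) {n : ℕ} {E : Type}
    (m : Fin (n + 1) → ℕ) (evs : ∀ _ : Fin (n + 1), ℕ → E) :
    (UnionHasESSP τ (fun i => linTS (m i) (evs i)) ↔ HasESSP τ (LJ m evs)) ∧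
    (UnionHasSSP τ (fun i => linTS (m i) (evs i)) ↔ HasSSP τ (LJ m evs)) :=
  ⟨⟨hτ.hasESSP_LJ, unionHasESSP_of_LJ⟩, ⟨hτ.hasSSP_LJ, unionHasSSP_of_LJ⟩⟩

/-- Let `τ ∈ {τ_PT^b, τ_PPT^b}` and let `U` be a union of linear TS
such that every event of `E(U)` occurs somewhere and, for every event `e ∈ E(U)`,
there is a state at which `e` does not occur. Then `U` has the `τ`-ESSP iff `LJ(U)`
has the `τ`-ESSP, and `U` has the `τ`-SSP iff `LJ(U)` has the `τ`-SSP. -/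
theorem stmt3 (b : ℕ) (hb : 1 ≤ b) (τ : NetType) (hτ : τ = tauPT b ∨ τ = tauPPT b)
    {n : ℕ} {E : Type} (m : Fin (n + 1) → ℕ) (evs : ∀ _ : Fin (n + 1), ℕ → E)
    (hocc : ∀ e : E, ∃ (i : Fin (n + 1)) (s s' : Fin (m i + 1)),
      (linTS (m i) (evs i)).delta s e = some s')
    (hundef : ∀ e : E, ∃ (i : Fin (n + 1)) (s : Fin (m i + 1)),
      (linTS (m i) (evs i)).delta s e = none) :
    (UnionHasESSP τ (fun i => linTS (m i) (evs i)) ↔ HasESSP τ (LJ m evs)) ∧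
    (UnionHasSSP τ (fun i => linTS (m i) (evs i)) ↔ HasSSP τ (LJ m evs)) := by
  have hjoin : τ.IsJoinable := by
    rcases hτ with rfl | rfl
    exacts [isJoinable_tauPT hb, isJoinable_tauPPT hb]
  exact stmt3_general hjoin m evs

end PNS
end

section
/- Let b ∈ ℕ⁺, τ ∈ {τ_PT^b, τ_PPT^b}, and let U = U(A₀,…,A_n) be a union of linear TS in which every event is 1-consistent or b-consistent. Let a ∈ E(U) be thinly distributed, let i ∈ {0,…,n} and let q ∈ Sᵢ be a state with δᵢ(q,a) undefined. If one of the following two conditions holds, then the ESSA (a,q) is solved by some τ-region of U: (1) a ∉ Eᵢ, or a ∈ Eᵢ and q occurs after a in Aᵢ; (2) a ∈ Eᵢ, a occurs after q in Aᵢ, and there is an event x ∈ Eᵢ ∖ {a} such that Aᵢ contains a state z with an incoming x-labeled edge and an outgoing a-labeled edge, x is thinly distributed, for every j ∈ {0,…,n} with a, x ∈ E_j the event x does not occur after a in A_j, and x is 1-consistent whenever a is b-consistent. -/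
namespace PNS

/-- `[l, r)` is a maximal block of consecutive `e`-labeled edges of the linear TS
with `m` edges labeled by `ev 0, …, ev (m-1)`. -/
def IsBlock {E : Type} (m : ℕ) (ev : ℕ → E) (e : E) (l r : ℕ) : Prop :=
  l < r ∧ r ≤ m ∧ (∀ j, l ≤ j → j < r → ev j = e) ∧
    (l = 0 ∨ ev (l - 1) ≠ e) ∧ (r = m ∨ ev r ≠ e)

/-- `e` is `c`-consistent in the union of the linear TS `linTS (ms i) (evs i)`:
every maximal block of consecutive `e`-labeled edges has length exactly `c`. -/
def ConsistentIn {ι E : Type} (ms : ι → ℕ) (evs : ι → ℕ → E) (c : ℕ) (e : E) : Prop :=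
  ∀ (i : ι) (l r : ℕ), IsBlock (ms i) (evs i) e l r → r - l = c

/-- `e` occurs in the linear TS with `m` edges labeled by `ev`. -/
def OccursIn {E : Type} (m : ℕ) (ev : ℕ → E) (e : E) : Prop :=
  ∃ j < m, ev j = e

/-- `e` is thinly distributed: it is `1`- or `b`-consistent and every constituent
in which it occurs contains exactly one maximal block of `e`. -/
def ThinlyDistributed {ι E : Type} (b : ℕ) (ms : ι → ℕ) (evs : ι → ℕ → E) (e : E) : Prop :=
  (ConsistentIn ms evs 1 e ∨ ConsistentIn ms evs b e) ∧
    ∀ i : ι, OccursIn (ms i) (evs i) e →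
      ∃! p : ℕ × ℕ, IsBlock (ms i) (evs i) e p.1 p.2

/-!
On a linear TS a region is determined by the signature and the supports of the initial states.
If no edge after `q` is labeled `a`, let `a` consume one token and let the support of a state be
the number of `a`-labeled edges still to come: it is at most `b` everywhere and `0` at `q`.
Otherwise let `a` consume and `x` produce, each with the weight that makes its single block move
exactly `b` tokens. Where both events occur, `x` comes first, so a constituent that contains `x`
can start at `0`, while one that contains only `a` starts at `b`. At `q` the block of `x` is
unfinished, hence the support is at most `b` minus the weight of `x`, which is less than the weight
of `a` as soon as one of the two weights is `b`.
-/

/-- The ESSA `(a, q)`, with `q` a state of the constituent `A i`, is solved by some `τ`-region of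
the union of the TS `A j`, whose states are encoded as pairs `⟨j, s⟩` with `s` a state of `A j`. -/
def SolvableESSA (τ : NetType) {ι : Type} {S : ι → Type} {E : Type} (A : ∀ j, TS (S j) E)
    (a : E) (i : ι) (q : S i) : Prop :=
  ∃ sup sig, UnionRegion τ A sup sig ∧ τ.delta (sup ⟨i, q⟩) (sig a) = none

section NetTypes

variable {b : ℕ} {ι E : Type} {S : ι → Type} {A : ∀ j, TS (S j) E}

theorem tauPPT_events_subset_tauPT_events (b : ℕ) : (tauPPT b).events ⊆ (tauPT b).events :=
  fun _ ⟨m, n, he, hm, hn, _⟩ => ⟨m, n, he, hm, hn⟩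

theorem SolvableESSA.tauPT_of_tauPPT {a : E} {i : ι} {q : S i} :
    SolvableESSA (tauPPT b) A a i q → SolvableESSA (tauPT b) A a i q :=
  fun ⟨sup, sig, ⟨hsup, hsig, hedge⟩, hnone⟩ =>
    ⟨sup, sig, ⟨hsup, fun e => tauPPT_events_subset_tauPT_events b (hsig e), hedge⟩, hnone⟩

theorem deltaPT_pair_eq_some {s t m n : ℕ} (hm : m ≤ s) (ht : t ≤ b) (hst : t + m = s + n) :
    deltaPT b s (.pair m n) = some t := by
  obtain rfl : t = s - m + n := by omega
  exact if_pos ⟨hm, ht⟩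

theorem deltaPT_pair_eq_none {s m : ℕ} (h : s < m) (n : ℕ) : deltaPT b s (.pair m n) = none :=
  if_neg fun hm => hm.1.not_gt h

end NetTypes

section LinTS

variable {E : Type} {m : ℕ} {ev : ℕ → E} {e : E}

theorem linTS_delta_eq_some_iff {s t : Fin (m + 1)} :
    (linTS m ev).delta s e = some t ↔ (s : ℕ) < m ∧ ev s = e ∧ (t : ℕ) = s + 1 := by
  simp only [linTS, Option.dite_none_right_eq_some, Option.some.injEq, Fin.ext_iff, exists_prop,
    and_assoc, eq_comm (a := (t : ℕ))]

theorem linTS_delta_eq_none_iff {s : Fin (m + 1)} :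
    (linTS m ev).delta s e = none ↔ ((s : ℕ) < m → ev s ≠ e) := by
  simp only [linTS, dite_eq_right_iff, reduceCtorEq, imp_false, not_and]

end LinTS

section Block

variable {E : Type} {m k : ℕ} {ev : ℕ → E} {e : E}

theorem exists_block_start (hk : ev k = e) :
    ∃ l ≤ k, (∀ j, l ≤ j → j ≤ k → ev j = e) ∧ (l = 0 ∨ ev (l - 1) ≠ e) := by
  induction k with
  | zero => exact ⟨0, le_rfl, fun j _ hj => Nat.le_zero.mp hj ▸ hk, .inl rfl⟩
  | succ k ih =>
    by_cases hprev : ev k = e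
    · obtain ⟨l, hlk, hl, hstart⟩ := ih hprev
      refine ⟨l, hlk.trans k.le_succ, fun j hlj hj => ?_, hstart⟩
      rcases Nat.le_succ_iff.mp hj with hj | rfl
      exacts [hl j hlj hj, hk]
    · exact ⟨k + 1, le_rfl, fun j hkj hj => le_antisymm hj hkj ▸ hk, .inr hprev⟩

theorem exists_block_end (hkm : k < m) (hk : ev k = e) :
    ∃ r, k < r ∧ r ≤ m ∧ (∀ j, k ≤ j → j < r → ev j = e) ∧ (r = m ∨ ev r ≠ e) := by
  classical
  have hex : ∃ r, k < r ∧ (r = m ∨ ev r ≠ e) := ⟨m, hkm, .inl rfl⟩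
  obtain ⟨hkr, hend⟩ := Nat.find_spec hex
  have hrm : Nat.find hex ≤ m := Nat.find_min' hex ⟨hkm, .inl rfl⟩
  refine ⟨Nat.find hex, hkr, hrm, fun j hkj hjr => ?_, hend⟩
  rcases hkj.eq_or_lt with rfl | hkj
  · exact hk
  · by_contra hj
    exact Nat.find_min hex hjr ⟨hkj, .inr hj⟩

theorem exists_isBlock (hkm : k < m) (hk : ev k = e) :
    ∃ l r, IsBlock m ev e l r ∧ k ∈ Finset.Ico l r := by
  obtain ⟨l, hlk, hl, hstart⟩ := exists_block_start hk
  obtain ⟨r, hkr, hrm, hr, hend⟩ := exists_block_end hkm hk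
  refine ⟨l, r, ⟨hlk.trans_lt hkr, hrm, fun j hlj hjr => ?_, hstart, hend⟩,
    Finset.mem_Ico.mpr ⟨hlk, hkr⟩⟩
  rcases le_total j k with hjk | hkj
  exacts [hl j hlj hjk, hr j hkj hjr]

theorem filter_range_eq_Ico_of_existsUnique_isBlock [DecidableEq E]
    (h : ∃! p : ℕ × ℕ, IsBlock m ev e p.1 p.2) :
    ∃ l r, IsBlock m ev e l r ∧ {k ∈ Finset.range m | ev k = e} = Finset.Ico l r := by
  obtain ⟨⟨l, r⟩, hblock, hunique⟩ := h
  obtain ⟨-, hrm, hlr, -⟩ := id hblock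
  refine ⟨l, r, hblock, Finset.ext fun k => ?_⟩
  rw [Finset.mem_filter, Finset.mem_range]
  constructor
  · rintro ⟨hkm, hk⟩
    obtain ⟨l', r', hblock', hmem⟩ := exists_isBlock hkm hk
    obtain ⟨rfl, rfl⟩ := Prod.mk.inj (hunique (l', r') hblock')
    exact hmem
  · intro hk
    obtain ⟨hlk, hkr⟩ := Finset.mem_Ico.mp hk
    exact ⟨hkr.trans_le hrm, hlr k hlk hkr⟩

end Block

section Count

variable {p q : ℕ → Prop} [DecidablePred p] [DecidablePred q] {m s t : ℕ}

theorem count_eq_count_of_forall_not (hst : s ≤ t) (h : ∀ k, s ≤ k → k < t → ¬ p k) :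
    Nat.count p s = Nat.count p t := by
  refine (Nat.count_monotone p hst).eq_of_not_lt fun hlt => ?_
  obtain ⟨k, hk, hpk⟩ := Nat.exists_of_count_lt_count hlt
  exact h k hk.1 hk.2 hpk

theorem count_eq_zero_or_count_eq_count (hsm : s ≤ m)
    (h : ∀ k r, k < m → r < m → p k → q r → r ≤ k) :
    Nat.count p s = 0 ∨ Nat.count q s = Nat.count q m := by
  rw [Nat.count_iff_forall_not, or_iff_not_imp_left]
  intro hp
  push Not at hp
  obtain ⟨k, hks, hpk⟩ := hp
  exact count_eq_count_of_forall_not hsm fun r hsr hrm hqr =>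
    (h k r (hks.trans_le hsm) hrm hpk hqr).not_gt (hks.trans_le hsr)

theorem mul_count_le_of_ordered (w v : ℕ) (hsm : s ≤ m)
    (h : ∀ k r, k < m → r < m → p k → q r → r ≤ k) :
    w * Nat.count p s ≤ w * Nat.count p m - v * Nat.count q m + v * Nat.count q s := by
  rcases count_eq_zero_or_count_eq_count hsm h with hp | hq
  · simp only [hp, mul_zero, Nat.zero_le]
  · calc w * Nat.count p s ≤ w * Nat.count p m := Nat.mul_le_mul_left w (Nat.count_monotone p hsm)
      _ ≤ w * Nat.count p m - v * Nat.count q m + v * Nat.count q m := le_tsub_add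
      _ = w * Nat.count p m - v * Nat.count q m + v * Nat.count q s := by rw [hq]

end Count

namespace ThinlyDistributed

variable {ι E : Type} {b c : ℕ} {ms : ι → ℕ} {evs : ι → ℕ → E} {e : E} {j : ι}

theorem ev_eq_of_between (h : ThinlyDistributed b ms evs e) {k₁ k k₂ : ℕ} (hk₁ : evs j k₁ = e)
    (hk₂ : evs j k₂ = e) (hk₁k : k₁ ≤ k) (hkk₂ : k ≤ k₂) (hk₂m : k₂ < ms j) : evs j k = e := by
  classical
  obtain ⟨l, r, -, hIco⟩ := filter_range_eq_Ico_of_existsUnique_isBlock (h.2 j ⟨k₂, hk₂m, hk₂⟩)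
  simp only [Finset.ext_iff, Finset.mem_filter, Finset.mem_range, Finset.mem_Ico] at hIco
  have hl := ((hIco k₁).mp ⟨by omega, hk₁⟩).1
  have hr := ((hIco k₂).mp ⟨hk₂m, hk₂⟩).2
  exact ((hIco k).mpr ⟨by omega, by omega⟩).2

variable [DecidableEq E]

theorem count_eq (h : ThinlyDistributed b ms evs e) (hc : ConsistentIn ms evs c e)
    (hocc : OccursIn (ms j) (evs j) e) : Nat.count (evs j · = e) (ms j) = c := by
  obtain ⟨l, r, hblock, hIco⟩ := filter_range_eq_Ico_of_existsUnique_isBlock (h.2 j hocc)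
  rw [Nat.count_eq_card_filter_range, hIco, Nat.card_Ico, hc j l r hblock]

theorem count_le (h : ThinlyDistributed b ms evs e) (hc : ConsistentIn ms evs c e) (j : ι) :
    Nat.count (evs j · = e) (ms j) ≤ c := by
  by_cases hocc : OccursIn (ms j) (evs j) e
  · exact (h.count_eq hc hocc).le
  · rw [Nat.count_iff_forall_not.mpr fun k hk hke => hocc ⟨k, hk, hke⟩]
    exact c.zero_le

theorem count_le_bound (h : ThinlyDistributed b ms evs e) (hb : 1 ≤ b) (j : ι) :
    Nat.count (evs j · = e) (ms j) ≤ b :=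
  h.1.elim (fun hc => (h.count_le hc j).trans hb) fun hc => h.count_le hc j

end ThinlyDistributed

section Regions

variable {ι E : Type} {b : ℕ} {ms : ι → ℕ} {evs : ι → ℕ → E}

theorem solvableESSA_tauPPT_of_potential {f : ι → ℕ → ℕ} {consume produce : E → ℕ}
    (hf : ∀ j s, s ≤ ms j → f j s ≤ b) (hconsume : ∀ e, consume e ≤ b)
    (hproduce : ∀ e, produce e ≤ b) (hpure : ∀ e, consume e = 0 ∨ produce e = 0)
    (hstep : ∀ j s, s < ms j → consume (evs j s) ≤ f j s ∧
      f j (s + 1) + consume (evs j s) = f j s + produce (evs j s))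
    {a : E} {i : ι} {q : Fin (ms i + 1)} (hq : f i q < consume a) :
    SolvableESSA (tauPPT b) (fun j => linTS (ms j) (evs j)) a i q := by
  refine ⟨fun p => f p.1 p.2, fun e => .pair (consume e) (produce e),
    ⟨fun p => hf p.1 p.2 (Nat.le_of_lt_succ p.2.isLt),
      fun e => ⟨_, _, rfl, hconsume e, hproduce e, hpure e⟩, fun j s e t hst => ?_⟩,
    deltaPT_pair_eq_none hq _⟩
  obtain ⟨hs, rfl, ht⟩ := linTS_delta_eq_some_iff.mp hst
  obtain ⟨hle, heq⟩ := hstep j s hs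
  rw [← ht] at heq
  exact deltaPT_pair_eq_some hle (hf j t (Nat.le_of_lt_succ t.isLt)) heq

variable [DecidableEq E] {a x : E} {i : ι} {q : Fin (ms i + 1)}

theorem solvableESSA_tauPPT_of_forall_ne (hb : 1 ≤ b)
    (ha : ∀ j, Nat.count (evs j · = a) (ms j) ≤ b)
    (hq : ∀ k, (q : ℕ) ≤ k → k < ms i → evs i k ≠ a) :
    SolvableESSA (tauPPT b) (fun j => linTS (ms j) (evs j)) a i q := by
  refine solvableESSA_tauPPT_of_potential
    (f := fun j s => Nat.count (evs j · = a) (ms j) - Nat.count (evs j · = a) s)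
    (consume := fun e => if e = a then 1 else 0) (produce := fun _ => 0)
    (fun j s _ => (Nat.sub_le _ _).trans (ha j)) (fun e => ?_) (fun _ => b.zero_le)
    (fun _ => .inr rfl) (fun j s hs => ?_) ?_
  · split_ifs <;> omega
  · have hmono := Nat.count_monotone (evs j · = a) (Nat.succ_le_of_lt hs)
    simp only [Nat.succ_eq_add_one, Nat.count_succ] at hmono ⊢
    split_ifs at hmono ⊢ <;> omega
  · rw [count_eq_count_of_forall_not (Nat.le_of_lt_succ q.isLt) hq, Nat.sub_self, if_pos rfl]
    exact one_pos

theorem solvableESSA_tauPPT_of_weights {w v : ℕ} (hxa : x ≠ a) (hw : w ≤ b) (hv : v ≤ b)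
    (ha : ∀ j, w * Nat.count (evs j · = a) (ms j) ≤ b)
    (hx : ∀ j, v * Nat.count (evs j · = x) (ms j) ≤ b)
    (hord : ∀ j k r, k < ms j → r < ms j → evs j k = a → evs j r = x → r ≤ k)
    (hbalance : w * Nat.count (evs i · = a) (ms i) ≤ v * Nat.count (evs i · = x) (ms i))
    (hq : v * Nat.count (evs i · = x) q < w) :
    SolvableESSA (tauPPT b) (fun j => linTS (ms j) (evs j)) a i q := by
  let A j s := w * Nat.count (evs j · = a) s
  let X j s := v * Nat.count (evs j · = x) s
  have hX {j s} (hs : s ≤ ms j) : X j s ≤ X j (ms j) :=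
    Nat.mul_le_mul_left v (Nat.count_monotone _ hs)
  have hAX {j s} (hs : s ≤ ms j) : A j s ≤ A j (ms j) - X j (ms j) + X j s :=
    mul_count_le_of_ordered w v hs (hord j)
  have hAsucc j s : A j (s + 1) = A j s + if evs j s = a then w else 0 := by
    simp only [A, Nat.count_succ, mul_add, mul_ite, mul_one, mul_zero]
  have hXsucc j s : X j (s + 1) = X j s + if evs j s = x then v else 0 := by
    simp only [X, Nat.count_succ, mul_add, mul_ite, mul_one, mul_zero]
  -- The truncated difference is the initial support: the least one for which no `a` of the
  -- constituent runs out of tokens.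
  refine solvableESSA_tauPPT_of_potential
    (f := fun j s => A j (ms j) - X j (ms j) + X j s - A j s)
    (consume := fun e => if e = a then w else 0) (produce := fun e => if e = x then v else 0)
    (fun j s hs => ?_) (fun e => ?_) (fun e => ?_) (fun e => ?_) (fun j s hs => ?_) ?_
  · have := hX hs
    have : A j (ms j) ≤ b := ha j
    have : X j (ms j) ≤ b := hx j
    omega
  · split_ifs <;> omega
  · split_ifs <;> omega
  · by_cases he : e = a
    · exact .inr (if_neg fun hex => hxa (hex.symm.trans he))
    · exact .inl (if_neg he)
  · have hnow := hAX hs.le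
    have hnext := hAX (Nat.succ_le_of_lt hs)
    simp only [Nat.succ_eq_add_one, hAsucc, hXsucc] at hnext ⊢
    split_ifs at hnext ⊢ with hea hex <;> first | omega | exact absurd (hex.symm.trans hea) hxa
  · have : A i (ms i) ≤ X i (ms i) := hbalance
    have : X i q < w := hq
    rw [if_pos rfl]
    omega

end Regions

section ThinEvents

variable {ι E : Type} {b : ℕ} {ms : ι → ℕ} {evs : ι → ℕ → E} {a x : E} {i : ι}
  {q : Fin (ms i + 1)}

theorem ThinlyDistributed.solvableESSA_tauPPT_of_not_occursIn_or_lt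
    (ha : ThinlyDistributed b ms evs a) (hb : 1 ≤ b)
    (hq : (linTS (ms i) (evs i)).delta q a = none)
    (hcase : ¬ OccursIn (ms i) (evs i) a ∨ ∃ k < (q : ℕ), evs i k = a) :
    SolvableESSA (tauPPT b) (fun j => linTS (ms j) (evs j)) a i q := by
  classical
  refine solvableESSA_tauPPT_of_forall_ne hb (ha.count_le_bound hb) fun r hqr hr hra => ?_
  rcases hcase with hocc | ⟨k, hkq, hka⟩
  · exact hocc ⟨r, hr, hra⟩
  · exact linTS_delta_eq_none_iff.mp hq (hqr.trans_lt hr)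
      (ha.ev_eq_of_between hka hra hkq.le hqr hr)

theorem exists_weights_of_consistentIn (hb : 1 ≤ b)
    (ha : ConsistentIn ms evs 1 a ∨ ConsistentIn ms evs b a)
    (hx : ConsistentIn ms evs 1 x ∨ ConsistentIn ms evs b x)
    (hax : ConsistentIn ms evs b a → ConsistentIn ms evs 1 x) :
    ∃ w c v d, ConsistentIn ms evs c a ∧ ConsistentIn ms evs d x ∧
      w * c = b ∧ v * d = b ∧ b < w + v := by
  rcases ha with ha | ha
  · rcases hx with hx | hx
    · exact ⟨b, 1, b, 1, ha, hx, b.mul_one, b.mul_one, by omega⟩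
    · exact ⟨b, 1, 1, b, ha, hx, b.mul_one, b.one_mul, by omega⟩
  · exact ⟨1, b, b, 1, ha, hax ha, b.one_mul, b.mul_one, by omega⟩

theorem ThinlyDistributed.solvableESSA_tauPPT_of_le_predecessor {z : ℕ}
    (ha : ThinlyDistributed b ms evs a) (hx : ThinlyDistributed b ms evs x) (hb : 1 ≤ b)
    (hxa : x ≠ a) (hax : ConsistentIn ms evs b a → ConsistentIn ms evs 1 x)
    (hord : ∀ j k r, k < ms j → r < ms j → evs j k = a → evs j r = x → r ≤ k)
    (hz : z + 1 < ms i) (hzx : evs i z = x) (hza : evs i (z + 1) = a) (hqz : (q : ℕ) ≤ z) :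
    SolvableESSA (tauPPT b) (fun j => linTS (ms j) (evs j)) a i q := by
  classical
  obtain ⟨w, c, v, d, hc, hd, hwc, hvd, hwv⟩ := exists_weights_of_consistentIn hb ha.1 hx.1 hax
  have hcount_a : Nat.count (evs i · = a) (ms i) = c := ha.count_eq hc ⟨z + 1, hz, hza⟩
  have hcount_x : Nat.count (evs i · = x) (ms i) = d := hx.count_eq hd ⟨z, by omega, hzx⟩
  have hlt : Nat.count (evs i · = x) q < d :=
    calc Nat.count (evs i · = x) q ≤ Nat.count (evs i · = x) z := Nat.count_monotone _ hqz
      _ < Nat.count (evs i · = x) (ms i) := Nat.count_strict_mono hzx (by omega)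
      _ = d := hcount_x
  refine solvableESSA_tauPPT_of_weights hxa (Nat.le_of_dvd hb ⟨c, hwc.symm⟩)
    (Nat.le_of_dvd hb ⟨d, hvd.symm⟩) (fun j => ?_) (fun j => ?_) hord ?_ ?_
  · exact (Nat.mul_le_mul_left w (ha.count_le hc j)).trans hwc.le
  · exact (Nat.mul_le_mul_left v (hx.count_le hd j)).trans hvd.le
  · rw [hcount_a, hcount_x, hwc, hvd]
  · have hfill : v * (Nat.count (evs i · = x) q + 1) ≤ v * d := Nat.mul_le_mul_left v hlt
    rw [mul_add_one, hvd] at hfill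
    omega

end ThinEvents

theorem stmt5_general (b : ℕ) (hb : 1 ≤ b) (τ : NetType) (hτ : τ = tauPT b ∨ τ = tauPPT b)
    {ι E : Type} (ms : ι → ℕ) (evs : ι → ℕ → E) (a : E) (ha : ThinlyDistributed b ms evs a)
    (i : ι) (q : Fin (ms i + 1)) (hq : (linTS (ms i) (evs i)).delta q a = none)
    (hcase :
      (¬ OccursIn (ms i) (evs i) a ∨ ∃ idx < ms i, evs i idx = a ∧ idx + 1 < (q : ℕ)) ∨
      ((∃ idx < ms i, evs i idx = a ∧ (q : ℕ) ≤ idx) ∧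
        ∃ x : E, x ≠ a ∧
          (∃ idx, 1 ≤ idx ∧ idx < ms i ∧ evs i (idx - 1) = x ∧ evs i idx = a) ∧
          ThinlyDistributed b ms evs x ∧
          (∀ j : ι, OccursIn (ms j) (evs j) a → OccursIn (ms j) (evs j) x →
            ¬ ∃ p r, p < ms j ∧ r < ms j ∧ evs j p = a ∧ evs j r = x ∧ p < r) ∧
          (ConsistentIn ms evs b a → ConsistentIn ms evs 1 x))) :
    SolvableESSA τ (fun j => linTS (ms j) (evs j)) a i q := by
  suffices h : SolvableESSA (tauPPT b) (fun j => linTS (ms j) (evs j)) a i q by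
    rcases hτ with rfl | rfl
    exacts [h.tauPT_of_tauPPT, h]
  rcases hcase with hafter | ⟨⟨r, hr, hra, hqr⟩, x, hxa, ⟨z, hz, hzm, hzx, hza⟩, hx, hord, hax⟩
  · exact ha.solvableESSA_tauPPT_of_not_occursIn_or_lt hb hq <| hafter.imp_right
      fun ⟨k, _, hka, hkq⟩ => ⟨k, Nat.lt_of_succ_lt hkq, hka⟩
  · obtain ⟨z, rfl⟩ := Nat.exists_eq_add_of_le' hz
    have hqz : (q : ℕ) ≤ z := by
      by_contra! hzq
      exact linTS_delta_eq_none_iff.mp hq (hqr.trans_lt hr)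
        (ha.ev_eq_of_between hza hra hzq hqr hr)
    refine ha.solvableESSA_tauPPT_of_le_predecessor hx hb hxa hax (fun j k r hk hr hka hrx => ?_)
      hzm hzx hza hqz
    by_contra! hkr
    exact hord j ⟨k, hk, hka⟩ ⟨r, hr, hrx⟩ ⟨k, r, hk, hr, hka, hrx, hkr⟩

/-- Let `τ ∈ {τ_PT^b, τ_PPT^b}` and let `U` be a union of linear TS
in which every event is `1`-consistent or `b`-consistent.  If `a ∈ E(U)` is thinly
distributed, `q` is a state of the constituent `A i` at which `a` does not occur, and
condition (1) or condition (2) of the statement holds, then the ESSA `(a, q)` is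
solved by some `τ`-region of `U`. -/
theorem stmt5 (b : ℕ) (hb : 1 ≤ b) (τ : NetType) (hτ : τ = tauPT b ∨ τ = tauPPT b)
    {ι E : Type} (ms : ι → ℕ) (evs : ι → ℕ → E)
    (hcons : ∀ e : E, ConsistentIn ms evs 1 e ∨ ConsistentIn ms evs b e)
    (a : E) (ha : ThinlyDistributed b ms evs a)
    (haocc : ∃ i : ι, OccursIn (ms i) (evs i) a)
    (i : ι) (q : Fin (ms i + 1)) (hq : (linTS (ms i) (evs i)).delta q a = none)
    (hcase :
      -- (1): `a ∉ Eᵢ`, or `a ∈ Eᵢ` and `q` occurs after `a` in `Aᵢ`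
      ((¬ OccursIn (ms i) (evs i) a) ∨
        (OccursIn (ms i) (evs i) a ∧ ∃ idx < ms i, evs i idx = a ∧ idx + 1 < (q : ℕ))) ∨
      -- (2): `a ∈ Eᵢ`, `a` occurs after `q`, and a suitable event `x` exists
      (OccursIn (ms i) (evs i) a ∧
        (∃ idx < ms i, evs i idx = a ∧ (q : ℕ) ≤ idx) ∧
        ∃ x : E, x ≠ a ∧
          (∃ idx, 1 ≤ idx ∧ idx < ms i ∧ evs i (idx - 1) = x ∧ evs i idx = a) ∧
          ThinlyDistributed b ms evs x ∧
          (∀ j : ι, OccursIn (ms j) (evs j) a → OccursIn (ms j) (evs j) x →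
            ¬ ∃ p r, p < ms j ∧ r < ms j ∧ evs j p = a ∧ evs j r = x ∧ p < r) ∧
          (ConsistentIn ms evs b a → ConsistentIn ms evs 1 x))) :
    ∃ sup sig, UnionRegion τ (fun j => linTS (ms j) (evs j)) sup sig ∧
      τ.delta (sup ⟨i, q⟩) (sig a) = none :=
  stmt5_general b hb τ hτ ms evs a ha i q hq
    (hcase.imp (Or.imp_right And.right) And.right)

end PNS
end

section
/- Let b ∈ ℕ⁺ and let φ be an instance of cubic monotone one-in-three 3-SAT. If the union U_{τ_PPT^b}(φ) has the τ_PPT^b-ESSP, then φ has a one-in-three model. -/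
namespace PNS

/-- An instance of cubic monotone one-in-three 3-SAT with `m` clauses over the
`m` variables `Fin m`: the `i`-th clause is `{cl i 0, cl i 1, cl i 2}` with
`cl i 0 < cl i 1 < cl i 2`, and every variable occurs in exactly three clauses. -/
structure CMSat (m : ℕ) : Type where
  cl : Fin m → Fin 3 → Fin m
  mono01 : ∀ i, cl i 0 < cl i 1
  mono12 : ∀ i, cl i 1 < cl i 2
  cubic : ∀ v : Fin m,
    (Finset.univ.filter (fun i => v = cl i 0 ∨ v = cl i 1 ∨ v = cl i 2)).card = 3

/-- `M` is a one-in-three model of `φ`: every clause contains exactly one variable of `M`. -/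
def OneInThreeModel {m : ℕ} (φ : CMSat m) (M : Set (Fin m)) : Prop :=
  ∀ i : Fin m, ∃! j : Fin 3, φ.cl i j ∈ M

/-- Index set of the gadgets of the union `U_{τ_PPT^b}(φ)`. -/
inductive PPTIdx (m : ℕ) : Type
  | H : PPTIdx m
  | D : Fin 4 → PPTIdx m
  | F : Fin (2 * m) → PPTIdx m
  | G : Fin (2 * m) → PPTIdx m
  | M : Fin m → PPTIdx m
  | T : Fin m → PPTIdx m

/-- Events of the union `U_{τ_PPT^b}(φ)`. -/
inductive PPTEv (m : ℕ) : Type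
  | k : PPTEv m
  | y0 : PPTEv m
  | y1 : PPTEv m
  | o0 : PPTEv m
  | o1 : PPTEv m
  | kk : Fin 4 → PPTEv m
  | z : Fin (2 * m) → PPTEv m
  | X : Fin m → PPTEv m
  deriving DecidableEq

/-- The label sequences of the linear gadgets of `U_{τ_PPT^b}(φ)`. -/
def gadPPT (b : ℕ) {m : ℕ} (φ : CMSat m) : PPTIdx m → List (PPTEv m)
  | .H => List.replicate b .k ++ [.y0, .o0] ++ List.replicate b .k ++
      [.y1, .y0, .o1] ++ List.replicate b .k
  | .D j => [.o0, .kk j, .o1]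
  | .F j => [.kk 0, .z j]
  | .G j => [.z j, .o0]
  | .M i => .kk 1 :: List.replicate b (.X i)
  | .T i => .kk 2 :: (List.replicate b (.X (φ.cl i 0)) ++
      .z ⟨2 * (i : ℕ), by have := i.isLt; omega⟩ :: (List.replicate b (.X (φ.cl i 1)) ++
      .z ⟨2 * (i : ℕ) + 1, by have := i.isLt; omega⟩ ::
        (List.replicate b (.X (φ.cl i 2)) ++ [.kk 3])))

/-- The union `U_{τ_PPT^b}(φ)` of linear gadget TS. -/
noncomputable def UPPT (b : ℕ) {m : ℕ} (φ : CMSat m) :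
    ∀ i : PPTIdx m, TS (Fin ((gadPPT b φ i).length + 1)) (PPTEv m) :=
  fun i => linOfList (gadPPT b φ i) PPTEv.k

/-! Since `τ_PPT^b` is pure, a region amounts to an initial support for every constituent and an
integer effect for every event such that all accumulated sums stay in `[0, b]`; negating the effects
and reflecting the supports in `[0, b]` gives another one. Take a region inhibiting `k` at
`h_{1,2b+4}`. The `b` consecutive `k` in `H₁` force the effect of `k` to be `±1`, and we may assume
`1`. Then `h_{1,2b+4}` has support `b` and every block `k^b` climbs from `0` to `b`, so that `H₁`
forces the effect `-b` on `o₀` and `o₁`. Now `D_j` gives `k_j` the effect `b`, `F_j` and `G_j` give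
`z_j` the effect `0`, and `M_i` gives `X_i` an effect in `{0, -1}`. Finally, in `T_i` the word
between `k₂` and `k₃` has effect `-b`, so the effects of the three variables of `ζᵢ` sum to `-1`:
the variables of effect `-1` form a model. -/

theorem sum_map_neg {α G : Type*} [SubtractionCommMonoid G] (f : α → G) (l : List α) :
    (l.map fun a => -f a).sum = -(l.map f).sum := by
  rw [List.sum_neg, List.map_map]
  rfl

theorem existsUnique_eq_neg_one {ι : Type*} [Fintype ι] {x : ι → ℤ}
    (hx : ∀ j, x j = 0 ∨ x j = -1) (hsum : ∑ j, x j = -1) : ∃! j, x j = -1 := by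
  have hite : ∀ j, x j = -if x j = -1 then 1 else 0 := fun j => by
    rcases hx j with h | h <;> simp [h]
  rw [Fintype.existsUnique_iff_card_one]
  rw [Finset.sum_congr rfl fun j _ => hite j, Finset.sum_neg_distrib, Finset.sum_boole] at hsum
  exact_mod_cast neg_injective hsum

/-- The change `n - m` of the state caused by an event `(m, n)`, which determines the event in a
pure type of nets; group events get the junk value `0`. -/
def effect (e : BEvent) : ℤ := (sigPlus e : ℤ) - (sigMinus e : ℤ)

theorem eq_add_effect_of_deltaPT_eq_some {b s t : ℕ} {e : BEvent}
    (h : deltaPT b s e = some t) : (t : ℤ) = s + effect e := by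
  cases e with
  | num z => simp [deltaPT] at h
  | pair p q =>
    simp only [deltaPT, Option.ite_none_right_eq_some, Option.some.injEq] at h
    simp only [effect, sigPlus, sigMinus]
    omega

theorem add_effect_notMem_Icc_of_delta_tauPPT_eq_none {b s : ℕ} {e : BEvent}
    (hs : s ∈ (tauPPT b).states) (he : e ∈ (tauPPT b).events)
    (h : (tauPPT b).delta s e = none) : (s : ℤ) + effect e ∉ Set.Icc (0 : ℤ) b := by
  obtain ⟨p, q, rfl, -, -, hpure⟩ := he
  change s ≤ b at hs
  simp only [tauPPT, deltaPT, ite_eq_right_iff, reduceCtorEq, imp_false] at h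
  simp only [effect, sigPlus, sigMinus, Set.mem_Icc]
  omega

theorem linOfList_delta_eq_some_iff {E : Type} {l : List E} {d e : E} {s t : Fin (l.length + 1)} :
    (linOfList l d).delta s e = some t ↔ l[(s : ℕ)]? = some e ∧ (t : ℕ) = s + 1 := by
  simp only [linOfList, linTS, Option.dite_none_right_eq_some, Option.some.injEq, Fin.ext_iff,
    List.getElem?_eq_some_iff]
  grind

theorem UnionRegion.sup_eq_add_sum {b : ℕ} {ι E : Type} {L : ι → List E} {d : E}
    {sup : (Σ i, Fin ((L i).length + 1)) → ℕ} {sig : E → BEvent}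
    (hr : UnionRegion (tauPPT b) (fun i => linOfList (L i) d) sup sig) (i : ι)
    (n : Fin ((L i).length + 1)) :
    (sup ⟨i, n⟩ : ℤ) = sup ⟨i, 0⟩ + (((L i).take n).map fun e => effect (sig e)).sum := by
  induction n using Fin.induction with
  | zero => simp
  | succ n ih =>
    have hedge : (linOfList (L i) d).delta n.castSucc (L i)[n] = some n.succ :=
      linOfList_delta_eq_some_iff.mpr ⟨by simp, by simp⟩
    rw [eq_add_effect_of_deltaPT_eq_some (hr.2.2 i _ _ _ hedge), ih, Fin.val_succ,
      List.take_add_one, List.getElem?_eq_getElem n.isLt]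
    simp [add_assoc]

/-- The weight `w`, started at `s` and accumulated along the word `l`, never leaves `[0, b]`. For
`s` the support of the initial state and `w` the effects of the signature, this is what a region
imposes on the linear TS labelled by `l`. -/
def PrefixBounded {E : Type*} (b s : ℤ) (w : E → ℤ) (l : List E) : Prop :=
  ∀ p, p <+: l → s + (p.map w).sum ∈ Set.Icc 0 b

theorem UnionRegion.prefixBounded {b : ℕ} {ι E : Type} {L : ι → List E} {d : E}
    {sup : (Σ i, Fin ((L i).length + 1)) → ℕ} {sig : E → BEvent}
    (hr : UnionRegion (tauPPT b) (fun i => linOfList (L i) d) sup sig) (i : ι) :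
    PrefixBounded b (sup ⟨i, 0⟩) (fun e => effect (sig e)) (L i) := by
  intro p hp
  have hsup := hr.sup_eq_add_sum i ⟨p.length, Nat.lt_succ_of_le hp.length_le⟩
  rw [← List.prefix_iff_eq_take.mp hp] at hsup
  rw [← hsup]
  exact ⟨Int.natCast_nonneg _, Int.ofNat_le.mpr (hr.1 _)⟩

namespace PrefixBounded

variable {E : Type*} {b s : ℤ} {w : E → ℤ} {l l₁ l₂ : List E} {e e' : E}

theorem start_mem (h : PrefixBounded b s w l) : s ∈ Set.Icc 0 b := by
  simpa using h [] l.nil_prefix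

theorem end_mem (h : PrefixBounded b s w l) : s + (l.map w).sum ∈ Set.Icc 0 b :=
  h l List.prefix_rfl

theorem nil_iff : PrefixBounded b s w [] ↔ s ∈ Set.Icc 0 b := by
  simp [PrefixBounded]

theorem cons_iff :
    PrefixBounded b s w (e :: l) ↔ s ∈ Set.Icc 0 b ∧ PrefixBounded b (s + w e) w l := by
  simp only [PrefixBounded, List.prefix_cons_iff]
  constructor
  · intro h
    exact ⟨by simpa using h [] (.inl rfl), fun p hp =>
      by simpa [add_assoc] using h (e :: p) (.inr ⟨p, rfl, hp⟩)⟩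
  · rintro ⟨hs, h⟩ p (rfl | ⟨q, rfl, hq⟩)
    · simpa using hs
    · simpa [add_assoc] using h q hq

theorem append_iff :
    PrefixBounded b s w (l₁ ++ l₂) ↔
      PrefixBounded b s w l₁ ∧ PrefixBounded b (s + (l₁.map w).sum) w l₂ := by
  induction l₁ generalizing s with
  | nil => simpa [nil_iff] using start_mem
  | cons e l₁ ih => simp [cons_iff, ih, and_assoc, add_assoc]

theorem neg (h : PrefixBounded b s w l) : PrefixBounded b (b - s) (fun e => -w e) l := by
  intro p hp
  have hmem := h p hp
  simp only [sum_map_neg, Set.mem_Icc] at hmem ⊢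
  omega

-- A step of weight `±b` joins the two ends of `[0, b]`, so the word `l` has to undo it before the
-- same step can occur again.
theorem sum_eq_neg_of_extremal (h : PrefixBounded b s w (e :: (l ++ [e'])))
    (he : |w e| = b) (he' : w e' = w e) : (l.map w).sum = -w e := by
  rw [cons_iff, append_iff, cons_iff, nil_iff] at h
  obtain ⟨hs, hl, hl', hend⟩ := h
  have hs' := hl.start_mem
  simp only [Set.mem_Icc] at hs hs' hl' hend
  rcases abs_cases (w e) with ⟨h, -⟩ | ⟨h, -⟩ <;> omega

theorem start_eq_zero_of_replicate {n : ℕ} (h : PrefixBounded n s w (List.replicate n e))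
    (he : w e = 1) : s = 0 := by
  have hs := h.start_mem
  have hend := h.end_mem
  simp only [List.map_replicate, List.sum_replicate, he, nsmul_eq_mul, mul_one,
    Set.mem_Icc] at hs hend
  omega

theorem abs_le_one_of_replicate {n : ℕ} (hn : 1 ≤ n)
    (h : PrefixBounded n s w (List.replicate n e)) : |w e| ≤ 1 := by
  have hs := h.start_mem
  have hend := h.end_mem
  simp only [List.map_replicate, List.sum_replicate, nsmul_eq_mul, Set.mem_Icc] at hs hend
  have hn' : (0 : ℤ) < n := by exact_mod_cast hn
  exact abs_le.mpr ⟨by nlinarith [hn'], by nlinarith [hn']⟩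

end PrefixBounded

/-- The labels of the path from `h_{1,0}` to `h_{1,2b+4}` in `H₁`. -/
def keyPrefix (b m : ℕ) : List (PPTEv m) :=
  List.replicate b .k ++ ([.y0, .o0] ++ (List.replicate b .k ++ [.y1, .y0]))

theorem length_keyPrefix (b m : ℕ) : (keyPrefix b m).length = 2 * b + 4 := by
  simp only [keyPrefix, List.length_append, List.length_replicate, List.length_cons,
    List.length_nil]
  omega

section Gadgets

variable {b m : ℕ} {φ : CMSat m}

theorem gadPPT_H_eq : gadPPT b φ .H = keyPrefix b m ++ .o1 :: List.replicate b .k := by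
  simp [gadPPT, keyPrefix]

variable (b φ) in
/-- The state `h_{1,2b+4}`, at which the reduction asks for `k` to be inhibited. -/
def keyState : Fin ((gadPPT b φ .H).length + 1) :=
  ⟨2 * b + 4, by rw [gadPPT_H_eq, List.length_append, length_keyPrefix]; omega⟩

theorem take_keyState : (gadPPT b φ .H).take (keyState b φ) = keyPrefix b m := by
  change (gadPPT b φ .H).take (2 * b + 4) = keyPrefix b m
  rw [gadPPT_H_eq, List.take_left' (length_keyPrefix b m)]

theorem delta_keyState_k : (UPPT b φ .H).delta (keyState b φ) .k = none := by
  rw [Option.eq_none_iff_forall_ne_some]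
  intro t ht
  have hk : (gadPPT b φ .H)[2 * b + 4]? = some .k := (linOfList_delta_eq_some_iff.mp ht).1
  rw [gadPPT_H_eq, List.getElem?_append_right (length_keyPrefix b m).le, length_keyPrefix] at hk
  simp at hk

variable {s : ℤ} {w : PPTEv m → ℤ}

theorem weight_k_of_add_notMem (hb : 1 ≤ b) (hH : PrefixBounded b s w (gadPPT b φ .H))
    (hout : s + ((keyPrefix b m).map w).sum + w .k ∉ Set.Icc (0 : ℤ) b) :
    w .k = 1 ∧ s + ((keyPrefix b m).map w).sum = b ∨
      w .k = -1 ∧ s + ((keyPrefix b m).map w).sum = 0 := by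
  rw [gadPPT_H_eq, PrefixBounded.append_iff] at hH
  obtain ⟨hpre, hpost⟩ := hH
  have hk := abs_le.mp ((PrefixBounded.append_iff.mp hpre).1.abs_le_one_of_replicate hb)
  have hkey := hpost.start_mem
  simp only [Set.mem_Icc] at hkey hout
  omega

theorem weight_o0_and_o1_of_H (hH : PrefixBounded b s w (gadPPT b φ .H)) (hk : w .k = 1)
    (hkey : s + ((keyPrefix b m).map w).sum = b) : w .o0 = -b ∧ w .o1 = -b := by
  rw [gadPPT_H_eq, PrefixBounded.append_iff, PrefixBounded.cons_iff, hkey] at hH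
  obtain ⟨hpre, -, hk₃⟩ := hH
  rw [keyPrefix] at hpre hkey
  simp only [PrefixBounded.append_iff] at hpre
  obtain ⟨hk₁, hy₀, hk₂, hy₁⟩ := hpre
  have h₁ := hk₁.start_eq_zero_of_replicate hk
  have h₂ := hk₂.start_eq_zero_of_replicate hk
  have h₃ := hk₃.start_eq_zero_of_replicate hk
  simp only [PrefixBounded.cons_iff, PrefixBounded.nil_iff] at hy₀ hy₁
  simp only [List.map_replicate, List.map_append, List.map_cons, List.map_nil, List.sum_replicate,
    List.sum_append, List.sum_cons, List.sum_nil, hk, nsmul_eq_mul, mul_one,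
    Set.mem_Icc] at h₂ hkey hy₀ hy₁
  have hy : w .y0 = 0 := by omega
  rw [hy] at hy₀ hy₁ hkey
  omega

theorem weight_kk_of_D {j : Fin 4} (hD : PrefixBounded b s w (gadPPT b φ (.D j)))
    (h₀ : w .o0 = -b) (h₁ : w .o1 = -b) : w (.kk j) = b := by
  have hsum := PrefixBounded.sum_eq_neg_of_extremal (l := [.kk j]) hD (by simp [h₀])
    (h₁.trans h₀.symm)
  simpa [h₀] using hsum

theorem weight_z_nonpos_of_F {j : Fin (2 * m)} (hF : PrefixBounded b s w (gadPPT b φ (.F j)))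
    (h₀ : w (.kk 0) = b) : w (.z j) ≤ 0 := by
  simp only [gadPPT, PrefixBounded.cons_iff, PrefixBounded.nil_iff, Set.mem_Icc] at hF
  omega

theorem weight_z_nonneg_of_G {j : Fin (2 * m)} (hG : PrefixBounded b s w (gadPPT b φ (.G j)))
    (h₀ : w .o0 = -b) : 0 ≤ w (.z j) := by
  simp only [gadPPT, PrefixBounded.cons_iff, PrefixBounded.nil_iff, Set.mem_Icc] at hG
  omega

theorem weight_X_of_M (hb : 1 ≤ b) {x : Fin m} (hM : PrefixBounded b s w (gadPPT b φ (.M x)))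
    (h₁ : w (.kk 1) = b) : w (.X x) = 0 ∨ w (.X x) = -1 := by
  obtain ⟨hs, hX⟩ := PrefixBounded.cons_iff.mp hM
  have habs := abs_le.mp (hX.abs_le_one_of_replicate hb)
  have hstart := hX.start_mem
  have hend := hX.end_mem
  simp only [List.map_replicate, List.sum_replicate, nsmul_eq_mul, Set.mem_Icc] at hs hstart hend
  have htop : s + w (.kk 1) = b := by omega
  have hb' : (0 : ℤ) < b := by exact_mod_cast hb
  have hle : w (.X x) ≤ 0 := by nlinarith [htop, hb']
  omega

theorem sum_weight_X_of_T (hb : 1 ≤ b) {i : Fin m} (hT : PrefixBounded b s w (gadPPT b φ (.T i)))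
    (hkk : ∀ j, w (.kk j) = b) (hz : ∀ j, w (.z j) = 0) :
    ∑ j, w (.X (φ.cl i j)) = -1 := by
  have hb' : (b : ℤ) ≠ 0 := by exact_mod_cast Nat.ne_of_gt hb
  simp only [gadPPT, ← List.append_assoc, ← List.cons_append] at hT
  have hsum := PrefixBounded.sum_eq_neg_of_extremal hT (by simp [hkk])
    ((hkk 3).trans (hkk 2).symm)
  refine mul_left_cancel₀ hb' ?_
  simp only [List.append_eq, List.map_append, List.map_replicate, List.map_cons, List.sum_append,
    List.sum_replicate, List.sum_cons, nsmul_eq_mul, hkk, hz, Fin.sum_univ_three] at hsum ⊢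
  linarith

theorem oneInThreeModel_of_prefixBounded (hb : 1 ≤ b) {s : PPTIdx m → ℤ}
    (hs : ∀ i, PrefixBounded b (s i) w (gadPPT b φ i)) (hk : w .k = 1)
    (hkey : s .H + ((keyPrefix b m).map w).sum = b) :
    OneInThreeModel φ {x | w (.X x) = -1} := by
  obtain ⟨ho₀, ho₁⟩ := weight_o0_and_o1_of_H (hs .H) hk hkey
  have hkk (j) : w (.kk j) = b := weight_kk_of_D (hs (.D j)) ho₀ ho₁
  have hz (j) : w (.z j) = 0 :=
    (weight_z_nonpos_of_F (hs (.F j)) (hkk 0)).antisymm (weight_z_nonneg_of_G (hs (.G j)) ho₀)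
  have hX (x) : w (.X x) = 0 ∨ w (.X x) = -1 := weight_X_of_M hb (hs (.M x)) (hkk 1)
  exact fun i => existsUnique_eq_neg_one (fun j => hX (φ.cl i j))
    (sum_weight_X_of_T hb (hs (.T i)) hkk hz)

end Gadgets

theorem stmt6_general (b : ℕ) (hb : 1 ≤ b) {m : ℕ} (φ : CMSat m)
    (h : ∃ sup sig, UnionRegion (tauPPT b) (UPPT b φ) sup sig ∧
      (tauPPT b).delta (sup ⟨.H, keyState b φ⟩) (sig .k) = none) :
    ∃ M : Set (Fin m), OneInThreeModel φ M := by
  obtain ⟨sup, sig, hr, hnone⟩ := h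
  set w : PPTEv m → ℤ := fun e => effect (sig e)
  have hw (i) : PrefixBounded b (sup ⟨i, 0⟩) w (gadPPT b φ i) := UnionRegion.prefixBounded hr i
  have hout := add_effect_notMem_Icc_of_delta_tauPPT_eq_none (hr.1 _) (hr.2.1 _) hnone
  rw [UnionRegion.sup_eq_add_sum hr, take_keyState] at hout
  rcases weight_k_of_add_notMem hb (hw .H) hout with ⟨hk, hkey⟩ | ⟨hk, hkey⟩
  · exact ⟨_, oneInThreeModel_of_prefixBounded hb hw hk hkey⟩
  · refine ⟨_, oneInThreeModel_of_prefixBounded hb (fun i => (hw i).neg) (by simp [hk]) ?_⟩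
    rw [sum_map_neg]
    omega

/-- If the union `U_{τ_PPT^b}(φ)` has the `τ_PPT^b`-ESSP, then the
cubic monotone one-in-three 3-SAT instance `φ` has a one-in-three model. -/
theorem stmt6 (b : ℕ) (hb : 1 ≤ b) {m : ℕ} (φ : CMSat m)
    (h : UnionHasESSP (tauPPT b) (UPPT b φ)) :
    ∃ M : Set (Fin m), OneInThreeModel φ M :=
  stmt6_general b hb φ (h .k .H (keyState b φ) delta_keyState_k)

end PNS
end
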